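/- Fix a ∈ ℤ and let b = max{a+4, |a|+1}. Assume θ ∈ Ḣ^b_⋄ and f ∈ Ḣ^{b−1}_⋄. Then the linear operator 𝒦 = 𝕀_θ*(𝕀_θ − ℒ) + (𝕀_θ − ℒ)*ℒ (so that 𝕀_θ*𝕀_θ = ℒ*ℒ + 𝒦) defines a compact operator from Ḣ^a_⋄ to Ḣ^{a+2}_⋄; in fact it maps Ḣ^a_⋄ continuously into Ḣ^{a+3}_⋄. -/

import Mathlib

open MeasureTheory Set
open scoped BigOperators

noncomputable section

namespace NS2D

/-- Nonzero Fourier frequencies of the 2D torus `Ω = 𝕋²`. -/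
def Freq : Type := {k : ℤ × ℤ // k ≠ 0}

/-- Squared Euclidean modulus `|k|²` of a frequency. -/
def knormSq (k : Freq) : ℝ := (k.1.1 : ℝ) ^ 2 + (k.1.2 : ℝ) ^ 2

/-- Eigenvalue `λ_k = 4π²|k|²` of the periodic Laplacian `−Δ`. -/
def lam (k : Freq) : ℝ := 4 * Real.pi ^ 2 * knormSq k

/-- A divergence-free mean-zero vector field `u ∈ Ḣ_⋄` (or, more generally, an
element of the scale `Ḣ^α_⋄`) on the torus is represented by its Fourier
coefficients `c k` along the orthonormal basis
`e_k(x) = |k|⁻¹ (k₂, −k₁) exp(2πi k·x)` of divergence-free fields. -/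
abbrev Coef : Type := Freq → ℂ

/-- Negation of a frequency. -/
def fneg (k : Freq) : Freq := ⟨-k.1, neg_ne_zero.mpr k.2⟩

/-- The conjugacy condition expressing that the coefficients `c` represent a
real-valued vector field (note `e_{−k} = − conj e_k`). -/
def IsReal (c : Coef) : Prop := ∀ k, c (fneg k) = - (starRingEnd ℂ) (c k)

/-- Squared homogeneous Sobolev norm `‖·‖²_{Ḣ^α} = Σ_k λ_k^α |c k|²`. -/
def hSq (α : ℝ) (c : Coef) : ℝ := ∑' k, lam k ^ α * ‖c k‖ ^ 2

/-- Homogeneous Sobolev norm `‖·‖_{Ḣ^α}`. -/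
def hN (α : ℝ) (c : Coef) : ℝ := Real.sqrt (hSq α c)

/-- Finiteness of the `Ḣ^α`-norm. -/
def FinH (α : ℝ) (c : Coef) : Prop := Summable fun k => lam k ^ α * ‖c k‖ ^ 2

/-- Membership in `Ḣ^α_⋄` (real-valued field with finite `Ḣ^α`-norm). -/
def MemH (α : ℝ) (c : Coef) : Prop := IsReal c ∧ FinH α c

/-- Membership in `Ḣ^∞_⋄ = C^∞(Ω)² ∩ Ḣ_⋄`: all Sobolev norms are finite. -/
def MemHinf (c : Coef) : Prop := ∀ α : ℝ, MemH α c

/-- Real `Ḣ^α` inner product `⟨·,·⟩_{Ḣ^α}` (for real-valued fields). -/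
def hInner (α : ℝ) (c d : Coef) : ℝ := ∑' k, lam k ^ α * (c k * (starRingEnd ℂ) (d k)).re

/-- The `L²` inner product. -/
def innerC (c d : Coef) : ℂ := ∑' k, c k * (starRingEnd ℂ) (d k)

/-- The unit vector `(k₂, −k₁)/|k|` spanning the divergence-free direction at
frequency `k`. -/
def evec (k : Freq) : ℝ × ℝ :=
  ((k.1.2 : ℝ) / Real.sqrt (knormSq k), -((k.1.1 : ℝ)) / Real.sqrt (knormSq k))

/-- Euclidean dot product on `ℝ²`. -/
def dotR (a b : ℝ × ℝ) : ℝ := a.1 * b.1 + a.2 * b.2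

/-- A frequency as a real vector. -/
def fvec (k : Freq) : ℝ × ℝ := ((k.1.1 : ℝ), (k.1.2 : ℝ))

/-- Fourier coefficients (along the basis `e_k`) of the Leray-projected
transport nonlinearity `B[u,v] = P[(u·∇)v]`:
`(B[u,v])^(k) · ē_k = 2πi Σ_{m+n=k, n≠0} c_m d_n (e_m·n)(e_n·e_k)`. -/
def Bc (c d : Coef) : Coef := fun k =>
  (((2 * Real.pi : ℝ) : ℂ) * Complex.I) *
    ∑' m : Freq,
      if h : k.1 - m.1 ≠ 0 then
        c m * d ⟨k.1 - m.1, h⟩ *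
          (((dotR (evec m) (fvec ⟨k.1 - m.1, h⟩) *
            dotR (evec ⟨k.1 - m.1, h⟩) (evec k) : ℝ)) : ℂ)
      else 0

/-- The Laplacian `Δ` acting on the scale: `(Δu)^(k) = −λ_k û(k)`. -/
def lapC (c : Coef) : Coef := fun k => -((lam k : ℝ) : ℂ) * c k

/-- Continuity of a trajectory `t ↦ u(t)`, `t ∈ [0,T]`, for the `Ḣ^α`-norm:
`u ∈ C([0,T], Ḣ^α_⋄)`. -/
def ContH (α : ℝ) (T : ℝ) (u : ℝ → Coef) : Prop :=
  ∀ t ∈ Icc (0:ℝ) T, ∀ ε > 0, ∃ δ > 0, ∀ s ∈ Icc (0:ℝ) T,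
    |s - t| < δ → hN α (u s - u t) < ε

/-- Membership `u ∈ L²([0,T], Ḣ^α_⋄)`. -/
def MemL2H (α : ℝ) (T : ℝ) (u : ℝ → Coef) : Prop :=
  (∀ t ∈ Ioc (0:ℝ) T, MemH α (u t)) ∧
    IntegrableOn (fun t => hSq α (u t)) (Ioc 0 T)

/-- `u` is a strong solution on `[0,T]` of the (Leray-projected) periodic 2D
Navier–Stokes equations `du/dt + νAu + B[u,u] = f`, `u(0) = θ`, posed in `Ḣ_⋄`:
the Fourier coefficients satisfy the corresponding system of ODEs on `(0,T]`,
the trajectory is continuous into `Ḣ¹_⋄` (in particular at `t = 0`), and lies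
in `L²([0,T], Ḣ²_⋄)`. -/
structure IsNSSol (ν : ℝ) (f : Coef) (T : ℝ) (θ : Coef) (u : ℝ → Coef) : Prop where
  init : u 0 = θ
  real : ∀ t ∈ Icc (0:ℝ) T, IsReal (u t)
  deriv : ∀ (k : Freq), ∀ t ∈ Ioc (0:ℝ) T,
    HasDerivAt (fun s => u s k)
      (f k - ((ν * lam k : ℝ) : ℂ) * u t k - Bc (u t) (u t) k) t
  contH1 : ContH 1 T u
  memL2H2 : MemL2H 2 T u

/-- `U` solves the linear parabolic equation
`dU/dt − νΔU + B[u₀, U] + B[U, u₁] = g`, `U(0) = ξ`, on `[0,T]`. -/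
structure IsLinPSol (ν : ℝ) (u₀ u₁ : ℝ → Coef) (g : ℝ → Coef) (T : ℝ) (ξ : Coef)
    (U : ℝ → Coef) : Prop where
  init : U 0 = ξ
  real : ∀ t ∈ Icc (0:ℝ) T, IsReal (U t)
  deriv : ∀ (k : Freq), ∀ t ∈ Ioc (0:ℝ) T,
    HasDerivAt (fun s => U s k)
      (g t k - ((ν * lam k : ℝ) : ℂ) * U t k - Bc (u₀ t) (U t) k - Bc (U t) (u₁ t) k) t

/-- `U = 𝕀_θ[ξ]` solves the linearisation of Navier–Stokes along the
trajectory `u₀`: `dU/dt − νΔU + B[u₀,U] + B[U,u₀] = 0`, `U(0) = ξ`. -/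
def IsLinSol (ν : ℝ) (u₀ : ℝ → Coef) (T : ℝ) (ξ : Coef) (U : ℝ → Coef) : Prop :=
  IsLinPSol ν u₀ u₀ (fun _ => 0) T ξ U

/-- The heat semigroup `S_t = e^{νtΔ}` on the scale `Ḣ^α_⋄`. -/
def heatS (ν t : ℝ) (c : Coef) : Coef := fun k =>
  ((Real.exp (-(ν * lam k * t)) : ℝ) : ℂ) * c k

/-- Duhamel representation of the solution of the periodic heat equation
`du/dt − νΔu = g`, `u(0) = h`. -/
def heatSol (ν : ℝ) (g : ℝ → Coef) (h : Coef) : ℝ → Coef := fun t k =>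
  ((Real.exp (-(ν * lam k * t)) : ℝ) : ℂ) *
    (h k + ∫ s in (0:ℝ)..t, ((Real.exp (ν * lam k * s) : ℝ) : ℂ) * g s k)

/-- Real-linearity of a map on the coefficient space. -/
def IsLinMap (Λ : Coef → Coef) : Prop :=
  (∀ c d, Λ (c + d) = Λ c + Λ d) ∧ ∀ (r : ℝ) (c : Coef), Λ (r • c) = r • Λ c

/-- `Λ` defines a compact (linear) operator `Ḣ^α_⋄ → Ḣ^β_⋄`: it is linear,
maps `Ḣ^α_⋄` into `Ḣ^β_⋄`, and the image of the `Ḣ^α`-unit ball is totally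
bounded for the `Ḣ^β`-norm. -/
def IsCompactOp (α β : ℝ) (Λ : Coef → Coef) : Prop :=
  IsLinMap Λ ∧ (∀ c, MemH α c → MemH β (Λ c)) ∧
    ∀ ε > 0, ∃ S : Finset Coef, ∀ c, MemH α c → hN α c ≤ 1 →
      ∃ s ∈ S, hN β (Λ c - s) < ε

/-- The index `a* = |a|+1` if `|a| ≤ 1`, `a* = |a|` if `|a| ≥ 2`. -/
def astar (a : ℤ) : ℤ := if |a| ≤ 1 then |a| + 1 else |a|

/-- `i`-th component of the unit vector `evec k`. -/
def evecC (i : Fin 2) (k : Freq) : ℝ := if i = 0 then (evec k).1 else (evec k).2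

/-- Fourier coefficients (over all of `ℤ²`) of the scalar component `u_i` of a
divergence-free field with coefficients `c`. -/
def compCoef (i : Fin 2) (c : Coef) : ℤ × ℤ → ℂ := fun n =>
  if h : n ≠ 0 then c ⟨n, h⟩ * ((evecC i ⟨n, h⟩ : ℝ) : ℂ) else 0

/-- Convolution: Fourier coefficients of a pointwise product of two scalar
functions. -/
def convC (F G : ℤ × ℤ → ℂ) : ℤ × ℤ → ℂ := fun n => ∑' m : ℤ × ℤ, F m * G (n - m)

/-- Squared homogeneous Sobolev norm of a scalar function given by its Fourier
coefficients over `ℤ²`. -/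
def hSqScalar (α : ℝ) (F : ℤ × ℤ → ℂ) : ℝ := ∑' k : Freq, lam k ^ α * ‖F k.1‖ ^ 2

/-- `‖u vᵀ‖²_{Ḣ^α} = Σ_{i,j=1}^2 ‖u_i v_j‖²_{Ḣ^α}`. -/
def hSqMat (α : ℝ) (c d : Coef) : ℝ :=
  ∑ i : Fin 2, ∑ j : Fin 2, hSqScalar α (convC (compCoef i c) (compCoef j d))

/-- The character `exp(2πi k·x)`. -/
def efun (k : Freq) (x : ℝ × ℝ) : ℂ :=
  Complex.exp ((((2 * Real.pi : ℝ)) : ℂ) * Complex.I *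
    ((k.1.1 : ℂ) * (x.1 : ℂ) + (k.1.2 : ℂ) * (x.2 : ℂ)))

/-- Pointwise evaluation of the `i`-th component of the field. -/
def evalComp (i : Fin 2) (c : Coef) (x : ℝ × ℝ) : ℂ :=
  ∑' k, c k * ((evecC i k : ℝ) : ℂ) * efun k x

/-- Supremum norm (`C⁰`-norm) of the field. -/
def c0N (c : Coef) : ℝ := ⨆ x : ℝ × ℝ, max ‖evalComp 0 c x‖ ‖evalComp 1 c x‖

/-- The partial derivative `∂_j` acting on divergence-free fields. -/
def pderiv (j : Fin 2) (c : Coef) : Coef := fun k =>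
  (((2 * Real.pi : ℝ) : ℂ) * Complex.I) *
    (if j = 0 then ((k.1.1 : ℤ) : ℂ) else ((k.1.2 : ℤ) : ℂ)) * c k

/-- `C¹`-norm of the field. -/
def c1N (c : Coef) : ℝ := c0N c + c0N (pderiv 0 c) + c0N (pderiv 1 c)

/-- Norm of the multiplier space `B^ℓ`: `C^ℓ(Ω)²` for `ℓ ≤ 1` and `Ḣ^ℓ` for
`ℓ ≥ 2`. -/
def bN (ℓ : ℕ) (c : Coef) : ℝ :=
  if ℓ = 0 then c0N c else if ℓ = 1 then c1N c else hN (ℓ : ℝ) c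

end NS2D

/-!
In Fourier coefficients, a weighted Young inequality for convolutions shows that `B[u, ·]` and
`B[·, u]` lose one derivative on `Ḣ^s` as soon as `u ∈ Ḣ^r` with `r > 1` and `|s| ≤ r`. Parabolic
bootstrap keeps `u_θ` bounded in `Ḣ^r` on `[0, T]`, so Grönwall makes `𝕀_θ` bounded from `Ḣ^s` to
`L²([0, T], Ḣ^{s+1})`. The difference `(𝕀_θ − ℒ)ξ` solves the heat equation with zero initial value
and forcing `−B[u_θ, 𝕀_θ ξ] − B[𝕀_θ ξ, u_θ]`, hence is one derivative better, in
`L²([0, T], Ḣ^{s+2})`. Using this with `s = a` for `ξ` and `s = −(a+3)` for `g`, the pairing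
`⟨𝒦ξ, g⟩` is at most `C ‖ξ‖_{Ḣ^a} ‖g‖_{Ḣ^{−(a+3)}}`, so `𝒦ξ ∈ Ḣ^{a+3}` by duality, and the
embedding `Ḣ^{a+3} ⊂ Ḣ^{a+2}` is compact.
-/

namespace NS2D

section ENNRealInequalities

lemma ennreal_add_sq_le (x y : ENNReal) : (x + y) ^ 2 ≤ 2 * (x ^ 2 + y ^ 2) := by
  have h := ENNReal.rpow_add_le_mul_rpow_add_rpow x y (p := 2) one_le_two
  simpa only [show (2 - 1 : ℝ) = 1 by norm_num, ENNReal.rpow_one, ENNReal.rpow_ofNat] using h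

lemma ennreal_add_add_sq_le (x y z : ENNReal) :
    (x + y + z) ^ 2 ≤ 4 * (x ^ 2 + y ^ 2 + z ^ 2) := by
  calc (x + y + z) ^ 2 ≤ 2 * (2 * (x ^ 2 + y ^ 2) + z ^ 2) := by
        refine (ennreal_add_sq_le _ _).trans ?_
        gcongr
        exact ennreal_add_sq_le x y
    _ ≤ 2 * (2 * (x ^ 2 + y ^ 2) + 2 * z ^ 2) := by
        gcongr
        exact le_mul_of_one_le_left' one_le_two
    _ = 4 * (x ^ 2 + y ^ 2 + z ^ 2) := by ring

lemma lintegral_mul_sq_le {X : Type*} [MeasurableSpace X] (μ : Measure X) {f g : X → ENNReal}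
    (hf : AEMeasurable f μ) (hg : AEMeasurable g μ) :
    (∫⁻ x, f x * g x ∂μ) ^ 2 ≤ (∫⁻ x, f x ^ 2 ∂μ) * ∫⁻ x, g x ^ 2 ∂μ := by
  have h := ENNReal.lintegral_mul_le_Lp_mul_Lq μ Real.HolderConjugate.two_two hf hg
  simp only [Pi.mul_apply, ENNReal.rpow_ofNat] at h
  calc (∫⁻ x, f x * g x ∂μ) ^ 2
      ≤ ((∫⁻ x, f x ^ 2 ∂μ) ^ (1 / 2 : ℝ) * (∫⁻ x, g x ^ 2 ∂μ) ^ (1 / 2 : ℝ)) ^ 2 := by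
        gcongr
    _ = (∫⁻ x, f x ^ 2 ∂μ) * ∫⁻ x, g x ^ 2 ∂μ := by
        rw [mul_pow, ← ENNReal.rpow_mul_natCast, ← ENNReal.rpow_mul_natCast]
        norm_num

lemma tsum_mul_sq_le {X : Type*} (f g : X → ENNReal) :
    (∑' x, f x * g x) ^ 2 ≤ (∑' x, f x ^ 2) * ∑' x, g x ^ 2 := by
  let _ : MeasurableSpace X := ⊤
  have : MeasurableSingletonClass X := ⟨fun _ => trivial⟩
  simpa only [lintegral_count] using
    lintegral_mul_sq_le Measure.count (measurable_from_top (f := f)).aemeasurable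
      (measurable_from_top (f := g)).aemeasurable

lemma rpow_sub_mul_rpow_le_add {s ρ : ℝ} (hs : 0 ≤ s) (hsρ : s ≤ ρ) (x y : ENNReal) :
    x ^ (ρ - s) * y ^ s ≤ x ^ ρ + y ^ ρ := by
  calc x ^ (ρ - s) * y ^ s ≤ max x y ^ (ρ - s) * max x y ^ s := by
        have := sub_nonneg.2 hsρ
        gcongr
        exacts [le_max_left x y, le_max_right x y]
    _ = max x y ^ ρ := by
        rw [← ENNReal.rpow_add_of_nonneg _ _ (sub_nonneg.2 hsρ) hs, sub_add_cancel]
    _ = max (x ^ ρ) (y ^ ρ) := (ENNReal.monotone_rpow_of_nonneg (hs.trans hsρ)).map_max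
    _ ≤ x ^ ρ + y ^ ρ := max_le_add_of_nonneg zero_le zero_le

lemma rpow_neg_sub_mul_rpow_neg_le_add {s ρ : ℝ} (hs : 0 ≤ s) (hsρ : s ≤ ρ) (x y : ENNReal) :
    x ^ (-(ρ - s)) * y ^ (-s) ≤ x ^ (-ρ) + y ^ (-ρ) := by
  simpa only [ENNReal.inv_rpow, ENNReal.rpow_neg] using
    rpow_sub_mul_rpow_le_add hs hsρ x⁻¹ y⁻¹

end ENNRealInequalities

section Convolution

variable {Γ : Type*} [AddCommGroup Γ]

/-- Convolution of `[0, ∞]`-valued functions on a discrete abelian group. -/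
def conv (F G : Γ → ENNReal) (k : Γ) : ENNReal := ∑' m, F m * G (k - m)

lemma conv_comm (F G : Γ → ENNReal) : conv F G = conv G F := by
  funext k
  rw [conv, ← (Equiv.subLeft k).tsum_eq]
  exact tsum_congr fun m => by simp [mul_comm]

lemma conv_sq_le (F G : Γ → ENNReal) (k : Γ) :
    conv F G k ^ 2 ≤ (∑' m, F m ^ 2) * ∑' m, G m ^ 2 := by
  rw [← (Equiv.subLeft k).tsum_eq fun m => G m ^ 2]
  exact tsum_mul_sq_le _ _

lemma tsum_conv_mul_left_sq_le (p F G : Γ → ENNReal) :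
    ∑' k, conv (p * F) G k ^ 2 ≤ (∑' m, p m ^ 2) * ((∑' m, F m ^ 2) * ∑' m, G m ^ 2) := by
  calc ∑' k, conv (p * F) G k ^ 2
      ≤ ∑' k, (∑' m, p m ^ 2) * ∑' m, (F m * G (k - m)) ^ 2 :=
        ENNReal.tsum_le_tsum fun k => by
          simpa only [conv, Pi.mul_apply, mul_assoc] using tsum_mul_sq_le p fun m => F m * G (k - m)
    _ = (∑' m, p m ^ 2) * ∑' m, F m ^ 2 * ∑' k, G (k - m) ^ 2 := by
        rw [ENNReal.tsum_mul_left, ENNReal.tsum_comm]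
        simp_rw [mul_pow, ENNReal.tsum_mul_left]
    _ = (∑' m, p m ^ 2) * ((∑' m, F m ^ 2) * ∑' m, G m ^ 2) := by
        congr 1
        rw [← ENNReal.tsum_mul_right]
        refine tsum_congr fun m => congrArg _ ?_
        exact (Equiv.subRight m).tsum_eq fun j => G j ^ 2

lemma tsum_conv_mul_right_sq_le (p F G : Γ → ENNReal) :
    ∑' k, conv F (p * G) k ^ 2 ≤ (∑' m, p m ^ 2) * ((∑' m, F m ^ 2) * ∑' m, G m ^ 2) := by
  rw [conv_comm, mul_comm (∑' m, F m ^ 2)]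
  exact tsum_conv_mul_left_sq_le p G F

lemma tsum_mul_conv_sq_le (p F G : Γ → ENNReal) :
    ∑' k, (p k * conv F G k) ^ 2 ≤ (∑' m, p m ^ 2) * ((∑' m, F m ^ 2) * ∑' m, G m ^ 2) := by
  simp only [mul_pow, ← ENNReal.tsum_mul_right]
  gcongr with k
  simpa only [ENNReal.tsum_mul_right] using conv_sq_le F G k

/-- A weight on an abelian group with values in `(0, ∞)`: even, and submultiplicative up to a
constant in the strong sense `w (m + n) ≤ A max (w m, w n)`, as for powers of a norm. -/
structure IsModerateWeight (w : Γ → ENNReal) (A : ENNReal) : Prop where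
  ne_zero : ∀ n, w n ≠ 0
  ne_top : ∀ n, w n ≠ ⊤
  neg : ∀ n, w (-n) = w n
  add_le : ∀ m n, w (m + n) ≤ A * max (w m) (w n)

variable {w : Γ → ENNReal} {A : ENNReal}

lemma IsModerateWeight.rpow_add_le (hw : IsModerateWeight w A) {s : ℝ} (hs : 0 ≤ s) (m n : Γ) :
    w (m + n) ^ s ≤ A ^ s * (w m ^ s + w n ^ s) := by
  calc w (m + n) ^ s ≤ (A * max (w m) (w n)) ^ s := by gcongr; exact hw.add_le m n
    _ = A ^ s * max (w m ^ s) (w n ^ s) := by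
        rw [ENNReal.mul_rpow_of_nonneg _ _ hs, (ENNReal.monotone_rpow_of_nonneg hs).map_max]
    _ ≤ A ^ s * (w m ^ s + w n ^ s) := by gcongr; exact max_le_add_of_nonneg zero_le zero_le

lemma IsModerateWeight.rpow_mul_rpow (hw : IsModerateWeight w A) (s t : ℝ) (n : Γ) :
    w n ^ s * w n ^ t = w n ^ (s + t) :=
  (ENNReal.rpow_add _ _ (hw.ne_zero n) (hw.ne_top n)).symm

lemma IsModerateWeight.rpow_neg_mul_rpow (hw : IsModerateWeight w A) (s : ℝ) (n : Γ) :
    w n ^ (-s) * w n ^ s = 1 := by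
  rw [hw.rpow_mul_rpow, neg_add_cancel, ENNReal.rpow_zero]

lemma IsModerateWeight.rpow_le_of_nonneg (hw : IsModerateWeight w A) {s ρ : ℝ}
    (hs : 0 ≤ s) (hsρ : s ≤ ρ) (m n : Γ) :
    w (m + n) ^ s
      ≤ A ^ s * ((2 * w m ^ (-ρ) + w n ^ (-ρ)) * (w m ^ ρ * w n ^ s)) := by
  have hm : w m ^ s ≤ (w m ^ (-ρ) + w n ^ (-ρ)) * (w m ^ ρ * w n ^ s) := by
    calc w m ^ s = w m ^ (-(ρ - s)) * w n ^ (-s) * (w m ^ ρ * w n ^ s) := by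
          rw [mul_mul_mul_comm, hw.rpow_mul_rpow, hw.rpow_neg_mul_rpow]
          ring_nf
      _ ≤ (w m ^ (-ρ) + w n ^ (-ρ)) * (w m ^ ρ * w n ^ s) := by
          gcongr
          exact rpow_neg_sub_mul_rpow_neg_le_add hs hsρ _ _
  have hn : w n ^ s = w m ^ (-ρ) * (w m ^ ρ * w n ^ s) := by
    rw [← mul_assoc, hw.rpow_neg_mul_rpow, one_mul]
  calc w (m + n) ^ s ≤ A ^ s * (w m ^ s + w n ^ s) := hw.rpow_add_le hs m n
    _ ≤ A ^ s * ((w m ^ (-ρ) + w n ^ (-ρ)) * (w m ^ ρ * w n ^ s)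
          + w m ^ (-ρ) * (w m ^ ρ * w n ^ s)) := by gcongr; exact hn.le
    _ = A ^ s * ((2 * w m ^ (-ρ) + w n ^ (-ρ)) * (w m ^ ρ * w n ^ s)) := by ring

lemma IsModerateWeight.rpow_neg_le_of_nonneg (hw : IsModerateWeight w A) {s ρ : ℝ}
    (hs : 0 ≤ s) (hsρ : s ≤ ρ) (m n : Γ) :
    w (m + n) ^ (-s)
      ≤ A ^ s * ((2 * w m ^ (-ρ) + w (m + n) ^ (-ρ)) * (w m ^ ρ * w n ^ (-s))) := by
  have hn : w n ^ s ≤ A ^ s * (w m ^ s + w (m + n) ^ s) := by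
    simpa [hw.neg] using hw.rpow_add_le hs (-m) (m + n)
  have hm : w (m + n) ^ (-s) * w m ^ s
      ≤ (w m ^ (-ρ) + w (m + n) ^ (-ρ)) * w m ^ ρ := by
    calc w (m + n) ^ (-s) * w m ^ s
        = w m ^ (-(ρ - s)) * w (m + n) ^ (-s) * w m ^ ρ := by
          rw [mul_right_comm, hw.rpow_mul_rpow, mul_comm]
          ring_nf
      _ ≤ (w m ^ (-ρ) + w (m + n) ^ (-ρ)) * w m ^ ρ := by
          gcongr
          exact rpow_neg_sub_mul_rpow_neg_le_add hs hsρ _ _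
  calc w (m + n) ^ (-s) = w (m + n) ^ (-s) * w n ^ s * w n ^ (-s) := by
        rw [mul_assoc, mul_comm (w n ^ s), hw.rpow_neg_mul_rpow, mul_one]
    _ ≤ w (m + n) ^ (-s) * (A ^ s * (w m ^ s + w (m + n) ^ s)) * w n ^ (-s) := by gcongr
    _ = A ^ s * ((w (m + n) ^ (-s) * w m ^ s + w (m + n) ^ (-s) * w (m + n) ^ s)
          * w n ^ (-s)) := by ring
    _ ≤ A ^ s * (((w m ^ (-ρ) + w (m + n) ^ (-ρ)) * w m ^ ρ + w m ^ (-ρ) * w m ^ ρ)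
          * w n ^ (-s)) := by
        rw [hw.rpow_neg_mul_rpow, hw.rpow_neg_mul_rpow]
        gcongr
    _ = A ^ s * ((2 * w m ^ (-ρ) + w (m + n) ^ (-ρ)) * (w m ^ ρ * w n ^ (-s))) := by ring

lemma IsModerateWeight.rpow_le (hw : IsModerateWeight w A) {s ρ : ℝ} (hsρ : |s| ≤ ρ)
    (m n : Γ) :
    w (m + n) ^ s ≤ A ^ |s| *
      (2 * (w (m + n) ^ (-ρ) + w m ^ (-ρ) + w n ^ (-ρ)) * (w m ^ ρ * w n ^ s)) := by
  rcases le_total 0 s with hs | hs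
  · rw [abs_of_nonneg hs] at hsρ ⊢
    refine (hw.rpow_le_of_nonneg hs hsρ m n).trans ?_
    gcongr
    rw [mul_add, mul_add, two_mul (w n ^ (-ρ))]
    exact add_le_add le_add_self le_add_self
  · rw [abs_of_nonpos hs] at hsρ ⊢
    have h := hw.rpow_neg_le_of_nonneg (neg_nonneg.2 hs) hsρ m n
    rw [neg_neg] at h
    refine h.trans ?_
    gcongr
    rw [mul_add, mul_add, two_mul (w (m + n) ^ (-ρ)), add_comm]
    exact le_add_right (add_le_add le_add_self le_rfl)

lemma IsModerateWeight.rpow_mul_conv_le (hw : IsModerateWeight w A) {s ρ : ℝ}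
    (hsρ : |s| ≤ ρ) (F G : Γ → ENNReal) (k : Γ) :
    w k ^ s * conv F G k ≤ A ^ |s| * (2 *
      (w k ^ (-ρ) * conv (fun m => w m ^ ρ * F m) (fun m => w m ^ s * G m) k
        + conv ((fun m => w m ^ (-ρ)) * fun m => w m ^ ρ * F m) (fun m => w m ^ s * G m) k
        + conv (fun m => w m ^ ρ * F m) ((fun m => w m ^ (-ρ)) * fun m => w m ^ s * G m) k)) := by
  simp only [conv, Pi.mul_apply, ← ENNReal.tsum_mul_left, ← ENNReal.tsum_add]
  refine ENNReal.tsum_le_tsum fun m => ?_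
  have h := hw.rpow_le hsρ m (k - m)
  rw [add_sub_cancel] at h
  calc w k ^ s * (F m * G (k - m))
      ≤ A ^ |s| * (2 * (w k ^ (-ρ) + w m ^ (-ρ) + w (k - m) ^ (-ρ))
          * (w m ^ ρ * w (k - m) ^ s)) * (F m * G (k - m)) := by gcongr
    _ = _ := by ring

/-- A weighted Young inequality, replacing the product estimate
`‖fg‖_{H^{2s}} ≤ C ‖f‖_{H^{2ρ}} ‖g‖_{H^{2s}}`. -/
lemma IsModerateWeight.tsum_rpow_mul_conv_sq_le (hw : IsModerateWeight w A) {s ρ : ℝ}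
    (hsρ : |s| ≤ ρ) (F G : Γ → ENNReal) :
    ∑' k, (w k ^ s * conv F G k) ^ 2 ≤ 48 * (A ^ |s|) ^ 2 * ((∑' m, (w m ^ (-ρ)) ^ 2) *
      ((∑' m, (w m ^ ρ * F m) ^ 2) * ∑' m, (w m ^ s * G m) ^ 2)) := by
  set p : Γ → ENNReal := fun m => w m ^ (-ρ)
  set F' : Γ → ENNReal := fun m => w m ^ ρ * F m
  set G' : Γ → ENNReal := fun m => w m ^ s * G m
  have hpoint (k : Γ) : (w k ^ s * conv F G k) ^ 2 ≤ 16 * (A ^ |s|) ^ 2 *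
      ((p k * conv F' G' k) ^ 2 + conv (p * F') G' k ^ 2 + conv F' (p * G') k ^ 2) := by
    calc (w k ^ s * conv F G k) ^ 2
        ≤ (A ^ |s| * (2 * (p k * conv F' G' k + conv (p * F') G' k
            + conv F' (p * G') k))) ^ 2 := pow_le_pow_left' (hw.rpow_mul_conv_le hsρ F G k) 2
      _ = 4 * (A ^ |s|) ^ 2 * (p k * conv F' G' k + conv (p * F') G' k
            + conv F' (p * G') k) ^ 2 := by ring
      _ ≤ 4 * (A ^ |s|) ^ 2 * (4 * ((p k * conv F' G' k) ^ 2 + conv (p * F') G' k ^ 2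
            + conv F' (p * G') k ^ 2)) := by
          gcongr
          exact ennreal_add_add_sq_le _ _ _
      _ = _ := by ring
  calc ∑' k, (w k ^ s * conv F G k) ^ 2
      ≤ ∑' k, 16 * (A ^ |s|) ^ 2 * ((p k * conv F' G' k) ^ 2 + conv (p * F') G' k ^ 2
          + conv F' (p * G') k ^ 2) := ENNReal.tsum_le_tsum hpoint
    _ = 16 * (A ^ |s|) ^ 2 * (∑' k, (p k * conv F' G' k) ^ 2
          + ∑' k, conv (p * F') G' k ^ 2 + ∑' k, conv F' (p * G') k ^ 2) := by
        rw [ENNReal.tsum_mul_left, ENNReal.tsum_add, ENNReal.tsum_add]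
    _ ≤ 16 * (A ^ |s|) ^ 2 * ((∑' m, p m ^ 2) * ((∑' m, F' m ^ 2) * ∑' m, G' m ^ 2)
          + (∑' m, p m ^ 2) * ((∑' m, F' m ^ 2) * ∑' m, G' m ^ 2)
          + (∑' m, p m ^ 2) * ((∑' m, F' m ^ 2) * ∑' m, G' m ^ 2)) := by
        gcongr
        exacts [tsum_mul_conv_sq_le p F' G', tsum_conv_mul_left_sq_le p F' G',
          tsum_conv_mul_right_sq_le p F' G']
    _ = _ := by ring

end Convolution

section LatticeWeight

/-- The symbol `4π²|n|²` of `-Δ` on the whole lattice `ℤ²`, including the zero mode. -/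
def lamZ (n : ℤ × ℤ) : ℝ := 4 * Real.pi ^ 2 * ((n.1 : ℝ) ^ 2 + (n.2 : ℝ) ^ 2)

lemma lamZ_neg (n : ℤ × ℤ) : lamZ (-n) = lamZ n := by simp [lamZ]

lemma lamZ_add_le (m n : ℤ × ℤ) : lamZ (m + n) ≤ 4 * max (lamZ m) (lamZ n) := by
  have h : lamZ (m + n) ≤ 2 * (lamZ m + lamZ n) := by
    have hπ : 0 ≤ 4 * Real.pi ^ 2 := by positivity
    simp only [lamZ, Prod.fst_add, Prod.snd_add, Int.cast_add]
    nlinarith [mul_nonneg hπ (sq_nonneg ((m.1 : ℝ) - n.1)),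
      mul_nonneg hπ (sq_nonneg ((m.2 : ℝ) - n.2))]
  linarith [le_max_left (lamZ m) (lamZ n), le_max_right (lamZ m) (lamZ n)]

lemma norm_sq_le_lamZ (n : ℤ × ℤ) : ‖n‖ ^ 2 ≤ lamZ n := by
  have hπ : 1 ≤ 4 * Real.pi ^ 2 := by nlinarith [Real.pi_gt_three]
  have hn : ‖n‖ ^ 2 ≤ (n.1 : ℝ) ^ 2 + (n.2 : ℝ) ^ 2 := by
    rcases max_choice ‖n.1‖ ‖n.2‖ with h | h <;>
      rw [Prod.norm_def, h, Int.norm_eq_abs, sq_abs]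
    · exact le_add_of_nonneg_right (sq_nonneg _)
    · exact le_add_of_nonneg_left (sq_nonneg _)
  calc ‖n‖ ^ 2 ≤ (n.1 : ℝ) ^ 2 + (n.2 : ℝ) ^ 2 := hn
    _ ≤ lamZ n := le_mul_of_one_le_left (by positivity) hπ

/-- The inhomogeneous Sobolev weight `max (1, 4π²|n|²)` on `ℤ²`. -/
def latticeWeight (n : ℤ × ℤ) : ENNReal := ENNReal.ofReal (max 1 (lamZ n))

lemma isModerateWeight_latticeWeight : IsModerateWeight latticeWeight 4 where
  ne_zero n := by simp [latticeWeight]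
  ne_top n := ENNReal.ofReal_ne_top
  neg n := by rw [latticeWeight, lamZ_neg, latticeWeight]
  add_le m n := by
    rw [latticeWeight, latticeWeight, latticeWeight, ← ENNReal.ofReal_max,
      show (4 : ENNReal) = ENNReal.ofReal 4 by simp, ← ENNReal.ofReal_mul (by norm_num)]
    refine ENNReal.ofReal_le_ofReal (max_le ?_ ((lamZ_add_le m n).trans ?_))
    · linarith [le_max_left (1 : ℝ) (lamZ m), le_max_left (max 1 (lamZ m)) (max 1 (lamZ n))]
    · gcongr <;> exact le_max_right _ _

lemma summable_norm_rpow_neg {s : ℝ} (hs : 2 < s) : Summable fun n : ℤ × ℤ => ‖n‖ ^ (-s) := by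
  have hnorm (n : ℤ × ℤ) : ‖(finTwoArrowEquiv ℤ).symm n‖ = ‖n‖ := by
    refine le_antisymm ((pi_norm_le_iff_of_nonneg (norm_nonneg n)).2 fun i => ?_)
      (max_le (norm_le_pi_norm ((finTwoArrowEquiv ℤ).symm n) 0)
        (norm_le_pi_norm ((finTwoArrowEquiv ℤ).symm n) 1))
    fin_cases i
    · exact norm_fst_le n
    · exact norm_snd_le n
  simpa only [Function.comp_def, hnorm] using
    (finTwoArrowEquiv ℤ).symm.summable_iff.2 (EisensteinSeries.summable_one_div_norm_rpow hs)

lemma tsum_latticeWeight_rpow_neg_ne_top {r : ℝ} (hr : 1 < r) :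
    ∑' n, latticeWeight n ^ (-r) ≠ ⊤ := by
  have hsum : Summable fun n : ℤ × ℤ => max 1 (lamZ n) ^ (-r) := by
    refine (summable_norm_rpow_neg (s := 2 * r) (by linarith)).of_norm_bounded_eventually ?_
    filter_upwards [(Set.finite_singleton (0 : ℤ × ℤ)).eventually_cofinite_notMem] with n hn
    have hpos : 0 < ‖n‖ := norm_pos_iff.2 hn
    rw [Real.norm_of_nonneg (by positivity), neg_mul_eq_mul_neg, Real.rpow_mul hpos.le,
      Real.rpow_two]
    exact Real.rpow_le_rpow_of_nonpos (by positivity)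
      ((norm_sq_le_lamZ n).trans (le_max_right _ _)) (by linarith)
  convert hsum.tsum_ofReal_ne_top using 3 with n
  exact ENNReal.ofReal_rpow_of_pos (by positivity)

end LatticeWeight

section SobolevEnergy

instance : Countable Freq := inferInstanceAs (Countable {k : ℤ × ℤ // k ≠ 0})

lemma one_le_lam (k : Freq) : 1 ≤ lam k := by
  have one_le_norm {n : ℤ} (hn : n ≠ 0) : 1 ≤ ‖n‖ := by
    rw [Int.norm_eq_abs]
    exact_mod_cast Int.one_le_abs hn
  have hnorm : 1 ≤ ‖k.1‖ := by
    rcases not_and_or.1 (mt Prod.ext_iff.2 k.2) with h | h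
    · exact (one_le_norm h).trans (norm_fst_le _)
    · exact (one_le_norm h).trans (norm_snd_le _)
  exact (one_le_pow₀ hnorm).trans (norm_sq_le_lamZ k.1)

lemma lam_pos (k : Freq) : 0 < lam k := zero_lt_one.trans_le (one_le_lam k)

/-- The eigenvalue `λ_k` as an extended nonnegative number. -/
def elam (k : Freq) : ENNReal := ENNReal.ofReal (lam k)

lemma one_le_elam (k : Freq) : 1 ≤ elam k := ENNReal.one_le_ofReal.2 (one_le_lam k)

lemma elam_ne_zero (k : Freq) : elam k ≠ 0 := (zero_lt_one.trans_le (one_le_elam k)).ne'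

lemma elam_ne_top (k : Freq) : elam k ≠ ⊤ := ENNReal.ofReal_ne_top

lemma elam_rpow_add (k : Freq) (s t : ℝ) : elam k ^ (s + t) = elam k ^ s * elam k ^ t :=
  ENNReal.rpow_add s t (elam_ne_zero k) (elam_ne_top k)

lemma elam_rpow (k : Freq) (s : ℝ) : elam k ^ s = ENNReal.ofReal (lam k ^ s) :=
  ENNReal.ofReal_rpow_of_pos (lam_pos k)

lemma latticeWeight_freq (k : Freq) : latticeWeight k.1 = elam k :=
  congrArg ENNReal.ofReal (max_eq_right (one_le_lam k))

/-- The squared norm `‖c‖²_{Ḣ^s}` as an extended nonnegative number, equal to `⊤` when `c ∉ Ḣ^s`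
(where `hSq` takes the junk value `0`). -/
def ehSq (s : ℝ) (c : Coef) : ENNReal := ∑' k, elam k ^ s * ‖c k‖ₑ ^ 2

lemma ehSq_mono {s t : ℝ} (hst : s ≤ t) (c : Coef) : ehSq s c ≤ ehSq t c := by
  unfold ehSq
  gcongr with k
  exact one_le_elam k

lemma ehSq_zero (s : ℝ) : ehSq s 0 = 0 := by simp [ehSq]

lemma ehSq_neg (s : ℝ) (c : Coef) : ehSq s (-c) = ehSq s c := by simp [ehSq]

lemma ehSq_smul (s a : ℝ) (c : Coef) : ehSq s (a • c) = ‖a‖ₑ ^ 2 * ehSq s c := by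
  simp only [ehSq, Pi.smul_apply, enorm_smul, mul_pow, ← ENNReal.tsum_mul_left]
  exact tsum_congr fun k => mul_left_comm _ _ _

lemma ehSq_add_le (s : ℝ) (c d : Coef) : ehSq s (c + d) ≤ 2 * (ehSq s c + ehSq s d) := by
  simp only [ehSq, ← ENNReal.tsum_add, ← ENNReal.tsum_mul_left]
  refine ENNReal.tsum_le_tsum fun k => ?_
  calc elam k ^ s * ‖(c + d) k‖ₑ ^ 2 ≤ elam k ^ s * (‖c k‖ₑ + ‖d k‖ₑ) ^ 2 := by
        gcongr
        exact enorm_add_le _ _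
    _ ≤ elam k ^ s * (2 * (‖c k‖ₑ ^ 2 + ‖d k‖ₑ ^ 2)) := by
        gcongr
        exact ennreal_add_sq_le _ _
    _ = 2 * (elam k ^ s * ‖c k‖ₑ ^ 2 + elam k ^ s * ‖d k‖ₑ ^ 2) := by ring

lemma ehSq_sub_le (s : ℝ) (c d : Coef) : ehSq s (c - d) ≤ 2 * (ehSq s c + ehSq s d) := by
  simpa only [sub_eq_add_neg, ehSq_neg] using ehSq_add_le s c (-d)

lemma ehSq_interpolation (s t : ℝ) (c : Coef) :
    ehSq ((s + t) / 2) c ^ 2 ≤ ehSq s c * ehSq t c := by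
  have hsq (u : ℝ) (k : Freq) : (elam k ^ (u / 2) * ‖c k‖ₑ) ^ 2 = elam k ^ u * ‖c k‖ₑ ^ 2 := by
    rw [mul_pow, sq (elam k ^ _), ← elam_rpow_add, add_halves]
  simp only [ehSq, ← hsq s, ← hsq t]
  refine le_of_eq_of_le ?_ (tsum_mul_sq_le _ _)
  congr! 3 with k
  rw [mul_mul_mul_comm, ← elam_rpow_add, ← add_div, sq ‖c k‖ₑ]

lemma ofReal_lam_rpow_mul_norm_sq (s : ℝ) (c : Coef) (k : Freq) :
    ENNReal.ofReal (lam k ^ s * ‖c k‖ ^ 2) = elam k ^ s * ‖c k‖ₑ ^ 2 := by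
  rw [ENNReal.ofReal_mul (Real.rpow_nonneg (lam_pos k).le s), ← elam_rpow,
    ENNReal.ofReal_pow (norm_nonneg _), ofReal_norm]

lemma lam_rpow_mul_norm_sq_nonneg (s : ℝ) (c : Coef) (k : Freq) : 0 ≤ lam k ^ s * ‖c k‖ ^ 2 :=
  mul_nonneg (Real.rpow_nonneg (lam_pos k).le s) (sq_nonneg _)

lemma hSq_nonneg (s : ℝ) (c : Coef) : 0 ≤ hSq s c :=
  tsum_nonneg (lam_rpow_mul_norm_sq_nonneg s c)

lemma finH_iff_ehSq_ne_top {s : ℝ} {c : Coef} : FinH s c ↔ ehSq s c ≠ ⊤ := by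
  simp only [ehSq, ← ofReal_lam_rpow_mul_norm_sq]
  refine ⟨Summable.tsum_ofReal_ne_top, fun h => ?_⟩
  have hsum := ENNReal.summable_toReal h
  simp only [ENNReal.toReal_ofReal (lam_rpow_mul_norm_sq_nonneg s c _)] at hsum
  exact hsum

lemma FinH.ehSq_eq {s : ℝ} {c : Coef} (hc : FinH s c) : ehSq s c = ENNReal.ofReal (hSq s c) := by
  rw [hSq, ENNReal.ofReal_tsum_of_nonneg (lam_rpow_mul_norm_sq_nonneg s c) hc]
  exact tsum_congr fun k => (ofReal_lam_rpow_mul_norm_sq s c k).symm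

lemma FinH.ehSq_eq_hN {s : ℝ} {c : Coef} (hc : FinH s c) :
    ehSq s c = ENNReal.ofReal (hN s c) ^ 2 := by
  rw [hc.ehSq_eq, hN, ← ENNReal.ofReal_pow (Real.sqrt_nonneg _), Real.sq_sqrt (hSq_nonneg s c)]

lemma FinH.mono {s t : ℝ} {c : Coef} (hst : s ≤ t) (hc : FinH t c) : FinH s c :=
  finH_iff_ehSq_ne_top.2 (ne_top_of_le_ne_top (finH_iff_ehSq_ne_top.1 hc) (ehSq_mono hst c))

lemma MemHinf.ehSq_ne_top {c : Coef} (hc : MemHinf c) (s : ℝ) : ehSq s c ≠ ⊤ :=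
  finH_iff_ehSq_ne_top.1 (hc s).2

end SobolevEnergy

section BilinearEstimates

lemma knormSq_pos (k : Freq) : 0 < knormSq k :=
  pos_of_mul_pos_right (lam_pos k) (by positivity)

lemma abs_dotR_le (a b : ℝ × ℝ) : |dotR a b| ≤ √(dotR a a) * √(dotR b b) := by
  rw [← Real.sqrt_mul (by unfold dotR; nlinarith), ← Real.sqrt_sq_eq_abs]
  refine Real.sqrt_le_sqrt ?_
  unfold dotR
  nlinarith [sq_nonneg (a.1 * b.2 - a.2 * b.1)]

lemma dotR_evec_self (k : Freq) : dotR (evec k) (evec k) = 1 := by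
  have hpos := Real.sqrt_pos.2 (knormSq_pos k)
  simp only [dotR, evec]
  field_simp
  rw [Real.sq_sqrt (knormSq_pos k).le, knormSq]
  ring

lemma dotR_evec_fvec_self (k : Freq) : dotR (evec k) (fvec k) = 0 := by
  simp only [dotR, evec, fvec]
  ring

lemma dotR_fvec_self (k : Freq) : dotR (fvec k) (fvec k) = knormSq k := by
  simp only [dotR, fvec, knormSq]
  ring

/-- Incompressibility: since `e_m ⊥ m`, the derivative in `B` may be moved onto the output
frequency `k = m + n`. -/
lemma dotR_evec_fvec_of_add {k m n : Freq} (h : n.1 = k.1 - m.1) :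
    dotR (evec m) (fvec n) = dotR (evec m) (fvec k) := by
  have hsub : dotR (evec m) (fvec n) = dotR (evec m) (fvec k) - dotR (evec m) (fvec m) := by
    simp only [dotR, fvec, h, Prod.fst_sub, Prod.snd_sub, Int.cast_sub]
    ring
  rw [hsub, dotR_evec_fvec_self, sub_zero]

lemma abs_dotR_mul_dotR_le {k m n : Freq} (h : n.1 = k.1 - m.1) :
    |dotR (evec m) (fvec n) * dotR (evec n) (evec k)| ≤ √(knormSq k) := by
  have hmk := abs_dotR_le (evec m) (fvec k)
  have hnk := abs_dotR_le (evec n) (evec k)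
  rw [dotR_evec_self, dotR_fvec_self, Real.sqrt_one, one_mul] at hmk
  rw [dotR_evec_self, dotR_evec_self, Real.sqrt_one, one_mul] at hnk
  rw [abs_mul, dotR_evec_fvec_of_add h]
  simpa only [mul_one] using mul_le_mul hmk hnk (abs_nonneg _) (Real.sqrt_nonneg _)

lemma elam_rpow_half (k : Freq) :
    elam k ^ (1 / 2 : ℝ) = ENNReal.ofReal (2 * Real.pi) * ENNReal.ofReal √(knormSq k) := by
  rw [elam_rpow, ← Real.sqrt_eq_rpow, lam, show 4 * Real.pi ^ 2 = (2 * Real.pi) ^ 2 by ring,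
    Real.sqrt_mul (sq_nonneg _), Real.sqrt_sq Real.two_pi_pos.le,
    ENNReal.ofReal_mul Real.two_pi_pos.le]

/-- The moduli of the coefficients `c`, extended by zero to the zero mode of `ℤ²`. -/
def normExt (c : Coef) : ℤ × ℤ → ENNReal := Function.extend (fun k : Freq => k.1) (‖c ·‖ₑ) 0

lemma freq_val_injective : Function.Injective fun k : Freq => k.1 := Subtype.val_injective

lemma normExt_freq (c : Coef) (k : Freq) : normExt c k.1 = ‖c k‖ₑ :=
  freq_val_injective.extend_apply _ _ k

lemma normExt_zero (c : Coef) : normExt c 0 = 0 :=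
  Function.extend_apply' _ _ _ fun ⟨k, hk⟩ => k.2 hk

lemma tsum_freq_eq {F : ℤ × ℤ → ENNReal} (h0 : F 0 = 0) : ∑' k : Freq, F k.1 = ∑' n, F n :=
  freq_val_injective.tsum_eq fun n hn => ⟨⟨n, fun h => hn (h ▸ h0)⟩, rfl⟩

lemma tsum_freq_le (F : ℤ × ℤ → ENNReal) : ∑' k : Freq, F k.1 ≤ ∑' n, F n :=
  ENNReal.tsum_comp_le_tsum_of_injective freq_val_injective F

lemma ehSq_eq_tsum_latticeWeight (s : ℝ) (c : Coef) :
    ehSq s c = ∑' n, (latticeWeight n ^ (s / 2) * normExt c n) ^ 2 := by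
  rw [← tsum_freq_eq (by simp [normExt_zero])]
  refine tsum_congr fun k => ?_
  rw [normExt_freq, latticeWeight_freq, mul_pow, sq (elam k ^ _), ← elam_rpow_add, add_halves]

lemma enorm_Bc_le (c d : Coef) (k : Freq) :
    ‖Bc c d k‖ₑ ≤ elam k ^ (1 / 2 : ℝ) * conv (normExt c) (normExt d) k.1 := by
  have hpi : ‖((2 * Real.pi : ℝ) : ℂ) * Complex.I‖ₑ = ENNReal.ofReal (2 * Real.pi) := by
    rw [← ofReal_norm, norm_mul, Complex.norm_real, Complex.norm_I, mul_one,
      Real.norm_of_nonneg Real.two_pi_pos.le]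
  rw [Bc, enorm_mul, hpi, elam_rpow_half, mul_assoc, conv, ← tsum_freq_eq (by simp [normExt_zero])]
  gcongr
  rw [← ENNReal.tsum_mul_left]
  refine enorm_tsum_le_tsum_enorm.trans (ENNReal.tsum_le_tsum fun m => ?_)
  split_ifs with h
  · rw [enorm_mul, enorm_mul, normExt_freq,
      show normExt d (k.1 - m.1) = ‖d ⟨k.1 - m.1, h⟩‖ₑ from normExt_freq d ⟨k.1 - m.1, h⟩,
      mul_comm (ENNReal.ofReal _)]
    gcongr
    rw [← ofReal_norm, Complex.norm_real, Real.norm_eq_abs]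
    exact ENNReal.ofReal_le_ofReal (abs_dotR_mul_dotR_le rfl)
  · simp

lemma ehSq_Bc_le_tsum_conv (s : ℝ) (c d : Coef) : ehSq (s - 1) (Bc c d) ≤
    ∑' n, (latticeWeight n ^ (s / 2) * conv (normExt c) (normExt d) n) ^ 2 := by
  refine le_trans (ENNReal.tsum_le_tsum fun k => ?_) (tsum_freq_le _)
  rw [latticeWeight_freq]
  calc elam k ^ (s - 1) * ‖Bc c d k‖ₑ ^ 2
      ≤ elam k ^ (s - 1) * (elam k ^ (1 / 2 : ℝ) * conv (normExt c) (normExt d) k.1) ^ 2 := by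
        gcongr
        exact enorm_Bc_le c d k
    _ = elam k ^ (s - 1) * (elam k ^ (1 / 2 : ℝ) * elam k ^ (1 / 2 : ℝ)) *
          conv (normExt c) (normExt d) k.1 ^ 2 := by ring
    _ = (elam k ^ (s / 2) * conv (normExt c) (normExt d) k.1) ^ 2 := by
        rw [mul_pow, sq (elam k ^ (s / 2)), ← elam_rpow_add, ← elam_rpow_add, ← elam_rpow_add]
        ring_nf

lemma exists_ehSq_Bc_le {r s : ℝ} (hr : 1 < r) (hs : |s| ≤ r) :
    ∃ K : NNReal, ∀ c d : Coef, ehSq (s - 1) (Bc c d) ≤ K * (ehSq r c * ehSq s d) ∧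
      ehSq (s - 1) (Bc d c) ≤ K * (ehSq r c * ehSq s d) := by
  have hsr : |s / 2| ≤ r / 2 := by rw [abs_div, abs_two]; linarith
  have hsum : ∑' n, (latticeWeight n ^ (-(r / 2))) ^ 2 ≠ ⊤ := by
    simpa only [sq, isModerateWeight_latticeWeight.rpow_mul_rpow, ← neg_add, add_halves] using
      tsum_latticeWeight_rpow_neg_ne_top hr
  obtain ⟨K, hK⟩ : ∃ K : NNReal,
      (K : ENNReal) = 48 * (4 ^ |s / 2|) ^ 2 * ∑' n, (latticeWeight n ^ (-(r / 2))) ^ 2 :=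
    ⟨_, ENNReal.coe_toNNReal (ENNReal.mul_ne_top (by finiteness) hsum)⟩
  have key (c d : Coef) :
      ∑' n, (latticeWeight n ^ (s / 2) * conv (normExt c) (normExt d) n) ^ 2
        ≤ K * (ehSq r c * ehSq s d) := by
    rw [hK, ehSq_eq_tsum_latticeWeight, ehSq_eq_tsum_latticeWeight, mul_assoc (48 * _)]
    exact isModerateWeight_latticeWeight.tsum_rpow_mul_conv_sq_le hsr _ _
  refine ⟨K, fun c d => ⟨(ehSq_Bc_le_tsum_conv s c d).trans (key c d), ?_⟩⟩
  refine (ehSq_Bc_le_tsum_conv s d c).trans ?_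
  rw [conv_comm]
  exact key c d

end BilinearEstimates

section EnergyInequality

lemma lintegral_enorm_sq_eq {E : Type*} [NormedAddCommGroup E] {T : ℝ} {h : ℝ → E}
    (hh : IntegrableOn (fun t => ‖h t‖ ^ 2) (Ioc 0 T)) :
    ∫⁻ t in Ioc 0 T, ‖h t‖ₑ ^ 2 = ENNReal.ofReal (∫ t in Ioc 0 T, ‖h t‖ ^ 2) := by
  rw [ofReal_integral_eq_lintegral_ofReal hh (ae_of_all _ fun t => sq_nonneg _)]
  simp only [ENNReal.ofReal_pow (norm_nonneg _), ofReal_norm]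

variable {E : Type*} [NormedAddCommGroup E] [InnerProductSpace ℝ E]
  {κ T : ℝ} {y g : ℝ → E}

lemma two_mul_inner_sub_smul_le (hκ : 0 < κ) (y g : E) :
    2 * inner ℝ y (g - κ • y) ≤ κ⁻¹ * ‖g‖ ^ 2 - κ * ‖y‖ ^ 2 := by
  have hyoung : 0 ≤ κ⁻¹ * (‖g‖ - κ * ‖y‖) ^ 2 := by positivity
  have hexpand : κ⁻¹ * (‖g‖ - κ * ‖y‖) ^ 2
      = κ⁻¹ * ‖g‖ ^ 2 + κ * ‖y‖ ^ 2 - 2 * (‖y‖ * ‖g‖) := by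
    field_simp
    ring
  rw [inner_sub_right, inner_smul_right, real_inner_self_eq_norm_sq]
  linarith [real_inner_le_norm y g]

lemma norm_sq_add_integral_le (hκ : 0 < κ) (hT : 0 ≤ T) (hy : ContinuousOn y (Icc 0 T))
    (hderiv : ∀ t ∈ Ioc 0 T, HasDerivAt y (g t - κ • y t) t)
    (hg : IntegrableOn (fun t => ‖g t‖ ^ 2) (Ioc 0 T)) :
    ‖y T‖ ^ 2 + κ * ∫ t in Ioc 0 T, ‖y t‖ ^ 2
      ≤ ‖y 0‖ ^ 2 + κ⁻¹ * ∫ t in Ioc 0 T, ‖g t‖ ^ 2 := by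
  have hyint : IntegrableOn (fun t => ‖y t‖ ^ 2) (Ioc 0 T) :=
    (hy.norm.pow 2).integrableOn_Icc.mono_set Ioc_subset_Icc_self
  have hmain := intervalIntegral.sub_le_integral_of_hasDeriv_right_of_le hT (hy.norm.pow 2)
    (fun t ht => (hderiv t (Ioo_subset_Ioc_self ht)).norm_sq.hasDerivWithinAt)
    ((integrableOn_Icc_iff_integrableOn_Ioc (by simp)).2
      ((hg.const_mul κ⁻¹).sub (hyint.const_mul κ)))
    (fun t _ => two_mul_inner_sub_smul_le hκ (y t) (g t))
  simp only [Pi.pow_apply] at hmain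
  rw [intervalIntegral.integral_of_le hT,
    integral_sub' (hg.const_mul κ⁻¹) (hyint.const_mul κ), integral_const_mul,
    integral_const_mul] at hmain
  linarith

lemma aestronglyMeasurable_forcing [CompleteSpace E] (hy : ContinuousOn y (Icc 0 T))
    (hderiv : ∀ t ∈ Ioc 0 T, HasDerivAt y (g t - κ • y t) t) :
    AEStronglyMeasurable g (volume.restrict (Ioc 0 T)) := by
  have hym : AEStronglyMeasurable y (volume.restrict (Ioc 0 T)) :=
    (hy.mono Ioc_subset_Icc_self).aestronglyMeasurable measurableSet_Ioc
  refine ((stronglyMeasurable_deriv y).aestronglyMeasurable.add (hym.const_smul κ)).congr ?_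
  filter_upwards [ae_restrict_mem measurableSet_Ioc] with t ht
  simp [(hderiv t ht).deriv]

lemma enorm_sq_add_lintegral_le [CompleteSpace E] (hκ : 0 < κ) (hT : 0 ≤ T)
    (hy : ContinuousOn y (Icc 0 T)) (hderiv : ∀ t ∈ Ioc 0 T, HasDerivAt y (g t - κ • y t) t) :
    ‖y T‖ₑ ^ 2 + ENNReal.ofReal κ * ∫⁻ t in Ioc 0 T, ‖y t‖ₑ ^ 2
      ≤ ‖y 0‖ₑ ^ 2 + (ENNReal.ofReal κ)⁻¹ * ∫⁻ t in Ioc 0 T, ‖g t‖ₑ ^ 2 := by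
  by_cases hfin : ∫⁻ t in Ioc 0 T, ‖g t‖ₑ ^ 2 = ⊤
  · rw [hfin, ENNReal.mul_top (by simp), add_top]
    exact le_top
  have hg : IntegrableOn (fun t => ‖g t‖ ^ 2) (Ioc 0 T) := by
    refine ⟨(aestronglyMeasurable_forcing hy hderiv).norm.pow 2, ?_⟩
    simpa only [HasFiniteIntegral, enorm_pow, enorm_norm] using lt_top_iff_ne_top.2 hfin
  have hyint : IntegrableOn (fun t => ‖y t‖ ^ 2) (Ioc 0 T) :=
    (hy.norm.pow 2).integrableOn_Icc.mono_set Ioc_subset_Icc_self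
  have hnonneg (h : ℝ → E) : 0 ≤ ∫ t in Ioc 0 T, ‖h t‖ ^ 2 :=
    integral_nonneg fun t => sq_nonneg _
  rw [lintegral_enorm_sq_eq hg, lintegral_enorm_sq_eq hyint, ← ENNReal.ofReal_inv_of_pos hκ,
    ← ofReal_norm, ← ofReal_norm, ← ENNReal.ofReal_pow (norm_nonneg _),
    ← ENNReal.ofReal_pow (norm_nonneg _), ← ENNReal.ofReal_mul hκ.le,
    ← ENNReal.ofReal_mul (inv_pos.2 hκ).le,
    ← ENNReal.ofReal_add (sq_nonneg _) (mul_nonneg hκ.le (hnonneg y)),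
    ← ENNReal.ofReal_add (sq_nonneg _) (mul_nonneg (inv_pos.2 hκ).le (hnonneg g))]
  exact ENNReal.ofReal_le_ofReal (norm_sq_add_integral_le hκ hT hy hderiv hg)

end EnergyInequality

section DampedHeatEquation

/-- The squared norm of `U` in `L²([0,T], Ḣ^s)`, as an extended nonnegative number. -/
def l2Sq (s T : ℝ) (U : ℝ → Coef) : ENNReal := ∫⁻ t in Ioc 0 T, ehSq s (U t)

/-- `U` solves the damped heat equation `dU/dt − νΔU + μU = G` on `[0,T]`, frequency by
frequency. The damping `μ` serves to absorb lower-order forcing. -/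
structure IsHeatSol (ν μ T : ℝ) (U G : ℝ → Coef) : Prop where
  continuousOn : ∀ k, ContinuousOn (fun t => U t k) (Icc 0 T)
  hasDerivAt : ∀ k, ∀ t ∈ Ioc 0 T,
    HasDerivAt (fun t => U t k) (G t k - (ν * lam k + μ) • U t k) t

variable {ν μ T s t : ℝ} {U G : ℝ → Coef}

lemma l2Sq_mono_set (ht : t ≤ T) : l2Sq s t U ≤ l2Sq s T U :=
  lintegral_mono_set (Ioc_subset_Ioc_right ht)

lemma l2Sq_mono {s' : ℝ} (hs : s ≤ s') : l2Sq s T U ≤ l2Sq s' T U :=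
  lintegral_mono fun t => ehSq_mono hs (U t)

lemma l2Sq_le_mul {V : ℝ → Coef} {s' : ℝ} {Q : ENNReal} (hQ : Q ≠ ⊤)
    (h : ∀ t ∈ Ioc 0 T, ehSq s (U t) ≤ Q * ehSq s' (V t)) : l2Sq s T U ≤ Q * l2Sq s' T V := by
  rw [l2Sq, l2Sq, ← lintegral_const_mul' _ _ hQ]
  exact setLIntegral_mono' measurableSet_Ioc h

lemma l2Sq_eq_tsum (hU : ∀ k, AEMeasurable (fun t => U t k) (volume.restrict (Ioc 0 T))) (s : ℝ) :
    l2Sq s T U = ∑' k, elam k ^ s * ∫⁻ t in Ioc 0 T, ‖U t k‖ₑ ^ 2 := by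
  simp only [l2Sq, ehSq]
  rw [lintegral_tsum fun k => ((hU k).enorm.pow_const 2).const_mul _]
  refine tsum_congr fun k => lintegral_const_mul' _ _ ?_
  rw [elam_rpow]
  exact ENNReal.ofReal_ne_top

namespace IsHeatSol

lemma mono (h : IsHeatSol ν μ T U G) (ht : t ≤ T) : IsHeatSol ν μ t U G :=
  ⟨fun k => (h.continuousOn k).mono (Icc_subset_Icc_right ht),
    fun k s hs => h.hasDerivAt k s (Ioc_subset_Ioc_right ht hs)⟩

lemma sub {V H : ℝ → Coef} (hU : IsHeatSol ν μ T U G) (hV : IsHeatSol ν μ T V H) :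
    IsHeatSol ν μ T (U - V) (G - H) := by
  refine ⟨fun k => (hU.continuousOn k).sub (hV.continuousOn k), fun k t ht => ?_⟩
  refine ((hU.hasDerivAt k t ht).sub (hV.hasDerivAt k t ht)).congr_deriv ?_
  simp only [Pi.sub_apply, smul_sub]
  ring

lemma aemeasurable (h : IsHeatSol ν μ T U G) (k : Freq) :
    AEMeasurable (fun t => U t k) (volume.restrict (Ioc 0 T)) :=
  ((h.continuousOn k).mono Ioc_subset_Icc_self).aemeasurable measurableSet_Ioc

lemma aemeasurable_forcing (h : IsHeatSol ν μ T U G) (k : Freq) :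
    AEMeasurable (fun t => G t k) (volume.restrict (Ioc 0 T)) :=
  (aestronglyMeasurable_forcing (h.continuousOn k) (h.hasDerivAt k)).aemeasurable

lemma mode_energy_le (h : IsHeatSol ν μ T U G) (hν : 0 < ν) (hμ : 0 ≤ μ) (hT : 0 ≤ T)
    (k : Freq) :
    ‖U T k‖ₑ ^ 2 + (ENNReal.ofReal ν * elam k + ENNReal.ofReal μ) * ∫⁻ t in Ioc 0 T, ‖U t k‖ₑ ^ 2
      ≤ ‖U 0 k‖ₑ ^ 2
        + (ENNReal.ofReal ν)⁻¹ * (elam k)⁻¹ * ∫⁻ t in Ioc 0 T, ‖G t k‖ₑ ^ 2 := by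
  have hlam := lam_pos k
  have hrate : ENNReal.ofReal (ν * lam k + μ) = ENNReal.ofReal ν * elam k + ENNReal.ofReal μ := by
    rw [ENNReal.ofReal_add (by positivity) hμ, ENNReal.ofReal_mul hν.le, elam]
  have henergy := enorm_sq_add_lintegral_le (by positivity) hT (h.continuousOn k) (h.hasDerivAt k)
  rw [hrate] at henergy
  refine henergy.trans ?_
  rw [← ENNReal.mul_inv (Or.inr (elam_ne_top k)) (Or.inr (elam_ne_zero k))]
  gcongr
  exact le_self_add

lemma energy_le (h : IsHeatSol ν μ T U G) (hν : 0 < ν) (hμ : 0 ≤ μ) (hT : 0 ≤ T) (s : ℝ) :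
    ehSq s (U T) + ENNReal.ofReal ν * l2Sq (s + 1) T U + ENNReal.ofReal μ * l2Sq s T U
      ≤ ehSq s (U 0) + (ENNReal.ofReal ν)⁻¹ * l2Sq (s - 1) T G := by
  rw [l2Sq_eq_tsum h.aemeasurable, l2Sq_eq_tsum h.aemeasurable,
    l2Sq_eq_tsum h.aemeasurable_forcing]
  simp only [ehSq, ← ENNReal.tsum_mul_left, ← ENNReal.tsum_add]
  refine ENNReal.tsum_le_tsum fun k => ?_
  rw [sub_eq_add_neg, elam_rpow_add, elam_rpow_add, ENNReal.rpow_one, ENNReal.rpow_neg_one]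
  refine le_of_eq_of_le ?_ ((mul_le_mul_right (h.mode_energy_le hν hμ hT k)
    (elam k ^ s)).trans_eq ?_) <;> ring

lemma l2Sq_succ_le (h : IsHeatSol ν 0 T U G) (hν : 0 < ν) (hT : 0 ≤ T) (s : ℝ) :
    l2Sq (s + 1) T U ≤ (ENNReal.ofReal ν)⁻¹ *
      (ehSq s (U 0) + (ENNReal.ofReal ν)⁻¹ * l2Sq (s - 1) T G) := by
  rw [← ENNReal.mul_le_iff_le_inv (by simpa using hν) ENNReal.ofReal_ne_top]
  exact le_trans (le_add_right le_add_self) (h.energy_le hν le_rfl hT s)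

lemma l2Sq_succ_ne_top (h : IsHeatSol ν 0 T U G) (hν : 0 < ν) (hT : 0 ≤ T)
    (h0 : ehSq s (U 0) ≠ ⊤) (hG : l2Sq (s - 1) T G ≠ ⊤) : l2Sq (s + 1) T U ≠ ⊤ := by
  have hν' : (ENNReal.ofReal ν)⁻¹ ≠ ⊤ := by simpa using hν
  exact ne_top_of_le_ne_top (by finiteness) (h.l2Sq_succ_le hν hT s)

lemma ehSq_le (h : IsHeatSol ν 0 T U G) (hν : 0 < ν) (s : ℝ) (ht : t ∈ Icc 0 T) :
    ehSq s (U t) ≤ ehSq s (U 0) + (ENNReal.ofReal ν)⁻¹ * l2Sq (s - 1) T G := by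
  refine le_trans (le_add_right le_self_add)
    (((h.mono ht.2).energy_le hν le_rfl ht.1 s).trans ?_)
  gcongr
  exact l2Sq_mono_set ht.2

lemma exp_smul (h : IsHeatSol ν 0 T U G) (μ : ℝ) :
    IsHeatSol ν μ T (fun t => Real.exp (-(μ * t)) • U t) (fun t => Real.exp (-(μ * t)) • G t) := by
  have hexp (t : ℝ) : HasDerivAt (fun t => Real.exp (-(μ * t))) (Real.exp (-(μ * t)) * -μ) t := by
    simpa using ((hasDerivAt_id t).const_mul μ).neg.exp
  refine ⟨fun k => ContinuousOn.smul (by fun_prop) (h.continuousOn k), fun k t ht => ?_⟩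
  refine ((hexp t).smul (h.hasDerivAt k t ht)).congr_deriv ?_
  simp only [Pi.smul_apply, Complex.real_smul]
  push_cast
  ring

lemma ehSq_exp_neg_smul_le {μ t : ℝ} (h : 0 ≤ μ * t) (s : ℝ) (c : Coef) :
    ehSq s (Real.exp (-(μ * t)) • c) ≤ ehSq s c := by
  rw [ehSq_smul, Real.enorm_of_nonneg (Real.exp_pos _).le]
  exact mul_le_of_le_one_left' (pow_le_one₀ zero_le
    (ENNReal.ofReal_le_one.2 (Real.exp_le_one_iff.2 (neg_nonpos.2 h))))

lemma ehSq_le_exp_sq_mul_ehSq_exp_neg_smul {μ t T : ℝ} (h : μ * t ≤ μ * T) (s : ℝ) (c : Coef) :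
    ehSq s c
      ≤ ENNReal.ofReal (Real.exp (μ * T)) ^ 2 * ehSq s (Real.exp (-(μ * t)) • c) := by
  rw [ehSq_smul, Real.enorm_of_nonneg (Real.exp_pos _).le, ← mul_assoc, ← mul_pow,
    ← ENNReal.ofReal_mul (Real.exp_pos _).le, ← Real.exp_add]
  refine le_mul_of_one_le_left' (one_le_pow₀ (ENNReal.one_le_ofReal.2 (Real.one_le_exp ?_)))
  linarith

/-- Grönwall in `L²([0,T], Ḣ^s)`: with `μ = Q/ν`, the function `e^{-μt} U` solves an equation whose
damping absorbs the forcing. -/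
lemma l2Sq_succ_le_of_forcing_le (h : IsHeatSol ν 0 T U G) (hν : 0 < ν) (hT : 0 ≤ T)
    {Q : NNReal} (hQ : ∀ t ∈ Ioc 0 T, ehSq (s - 1) (G t) ≤ Q * ehSq s (U t))
    (hU : l2Sq s T U ≠ ⊤) :
    l2Sq (s + 1) T U
      ≤ ENNReal.ofReal (Real.exp (Q / ν * T)) ^ 2 * (ENNReal.ofReal ν)⁻¹ * ehSq s (U 0) := by
  set μ : ℝ := Q / ν
  have hμ : 0 ≤ μ := by positivity
  have hμQ : ENNReal.ofReal μ = (ENNReal.ofReal ν)⁻¹ * Q := by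
    rw [ENNReal.ofReal_div_of_pos hν, ENNReal.ofReal_coe_nnreal, ENNReal.div_eq_inv_mul]
  set V : ℝ → Coef := fun t => Real.exp (-(μ * t)) • U t
  have hV_le (t : ℝ) (ht : t ∈ Ioc 0 T) : ehSq s (V t) ≤ 1 * ehSq s (U t) :=
    (ehSq_exp_neg_smul_le (mul_nonneg hμ ht.1.le) s (U t)).trans_eq (one_mul _).symm
  have hU_le (t : ℝ) (ht : t ∈ Ioc 0 T) :
      ehSq (s + 1) (U t) ≤ ENNReal.ofReal (Real.exp (μ * T)) ^ 2 * ehSq (s + 1) (V t) :=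
    ehSq_le_exp_sq_mul_ehSq_exp_neg_smul (mul_le_mul_of_nonneg_left ht.2 hμ) (s + 1) (U t)
  have hforcing : l2Sq (s - 1) T (fun t => Real.exp (-(μ * t)) • G t) ≤ Q * l2Sq s T V := by
    refine l2Sq_le_mul ENNReal.coe_ne_top fun t ht => ?_
    rw [ehSq_smul, ehSq_smul, mul_left_comm]
    gcongr
    exact hQ t ht
  have hVfin : l2Sq s T V ≠ ⊤ :=
    ne_top_of_le_ne_top (by simpa using hU) (l2Sq_le_mul ENNReal.one_ne_top hV_le)
  have hVenergy : ENNReal.ofReal ν * l2Sq (s + 1) T V ≤ ehSq s (U 0) := by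
    have henergy := (h.exp_smul μ).energy_le hν hμ hT s
    simp only [mul_zero, neg_zero, Real.exp_zero, one_smul, add_assoc] at henergy
    refine (ENNReal.add_le_add_iff_right (a := ENNReal.ofReal μ * l2Sq s T V)
      (by finiteness)).1 ((le_add_self.trans henergy).trans ?_)
    rw [hμQ, mul_assoc]
    gcongr
  rw [ENNReal.mul_le_iff_le_inv (by simpa using hν) ENNReal.ofReal_ne_top] at hVenergy
  refine (l2Sq_le_mul (by finiteness) hU_le).trans ?_
  rw [mul_assoc]
  gcongr

end IsHeatSol

lemma isHeatSol_heatS (ν T : ℝ) (ξ : Coef) : IsHeatSol ν 0 T (fun t => heatS ν t ξ) 0 := by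
  have hderiv (k : Freq) (t : ℝ) : HasDerivAt (fun t => heatS ν t ξ k)
      ((0 : Coef) k - (ν * lam k + 0) • heatS ν t ξ k) t := by
    have hexp : HasDerivAt (fun t => Real.exp (-(ν * lam k * t)))
        (Real.exp (-(ν * lam k * t)) * -(ν * lam k)) t := by
      simpa using ((hasDerivAt_id t).const_mul (ν * lam k)).neg.exp
    refine (hexp.ofReal_comp.mul_const (ξ k)).congr_deriv ?_
    simp only [heatS, Pi.zero_apply, Complex.real_smul]
    push_cast
    ring
  exact ⟨fun k t _ => (hderiv k t).continuousAt.continuousWithinAt, fun k t _ => hderiv k t⟩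

lemma heatS_zero (ν : ℝ) (ξ : Coef) : heatS ν 0 ξ = ξ := by
  funext k
  simp [heatS]

lemma l2Sq_heatS_le (hν : 0 < ν) (hT : 0 ≤ T) (s : ℝ) (ξ : Coef) :
    l2Sq (s + 1) T (fun t => heatS ν t ξ) ≤ (ENNReal.ofReal ν)⁻¹ * ehSq s ξ := by
  simpa [l2Sq, ehSq_zero, heatS_zero] using (isHeatSol_heatS ν T ξ).l2Sq_succ_le hν hT s

end DampedHeatEquation

section Trajectories

variable {s T : ℝ} {U : ℝ → Coef}

lemma FinH.sub {c d : Coef} (hc : FinH s c) (hd : FinH s d) : FinH s (c - d) := by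
  rw [finH_iff_ehSq_ne_top] at hc hd ⊢
  exact ne_top_of_le_ne_top (by finiteness) (ehSq_sub_le s c d)

lemma FinH.sqrt_lam_rpow_mul_norm_le_hN {c : Coef} (hc : FinH s c) (k : Freq) :
    √(lam k ^ s) * ‖c k‖ ≤ hN s c := by
  refine Real.le_sqrt_of_sq_le ?_
  rw [mul_pow, Real.sq_sqrt (Real.rpow_nonneg (lam_pos k).le s)]
  exact hc.le_tsum k fun j _ => lam_rpow_mul_norm_sq_nonneg s c j

lemma ContH.continuousOn_coord (hU : ContH s T U) (hfin : ∀ t ∈ Icc 0 T, FinH s (U t))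
    (k : Freq) : ContinuousOn (fun t => U t k) (Icc 0 T) := by
  intro t ht
  rw [Metric.continuousWithinAt_iff]
  intro ε hε
  have hlam : 0 < √(lam k ^ s) := Real.sqrt_pos.2 (Real.rpow_pos_of_pos (lam_pos k) s)
  obtain ⟨δ, hδ, hclose⟩ := hU t ht (√(lam k ^ s) * ε) (by positivity)
  refine ⟨δ, hδ, fun {τ} hτ hτt => ?_⟩
  rw [dist_eq_norm]
  refine lt_of_mul_lt_mul_left (lt_of_le_of_lt ?_ (hclose τ hτ hτt)) hlam.le
  exact ((hfin τ hτ).sub (hfin t ht)).sqrt_lam_rpow_mul_norm_le_hN k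

lemma ContH.exists_ehSq_le (hU : ContH s T U) (hfin : ∀ t ∈ Icc 0 T, FinH s (U t)) :
    ∃ M : NNReal, ∀ t ∈ Icc 0 T, ehSq s (U t) ≤ M := by
  refine isCompact_Icc.induction_on (p := fun J => ∃ M : NNReal, ∀ t ∈ J, ehSq s (U t) ≤ M)
    ⟨0, by simp⟩ (fun J J' hJ ⟨M, hM⟩ => ⟨M, fun t ht => hM t (hJ ht)⟩) ?_ fun t ht => ?_
  · rintro J J' ⟨M, hM⟩ ⟨M', hM'⟩
    refine ⟨max M M', fun t ht => ?_⟩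
    rw [ENNReal.coe_max]
    exact ht.elim (fun ht => (hM t ht).trans (le_max_left _ _))
      fun ht => (hM' t ht).trans (le_max_right _ _)
  obtain ⟨δ, hδ, hclose⟩ := hU t ht 1 one_pos
  refine ⟨Icc 0 T ∩ Metric.ball t δ, Filter.inter_mem self_mem_nhdsWithin
    (mem_nhdsWithin_of_mem_nhds (Metric.ball_mem_nhds t hδ)), ?_⟩
  lift ehSq s (U t) to NNReal using finH_iff_ehSq_ne_top.1 (hfin t ht) with M hM
  refine ⟨2 * (1 + M), fun τ ⟨hτ, hτt⟩ => ?_⟩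
  have hdiff : ehSq s (U τ - U t) ≤ 1 := by
    rw [((hfin τ hτ).sub (hfin t ht)).ehSq_eq_hN]
    exact pow_le_one₀ zero_le (ENNReal.ofReal_le_one.2 (hclose τ hτ hτt).le)
  calc ehSq s (U τ) = ehSq s ((U τ - U t) + U t) := by rw [sub_add_cancel]
    _ ≤ 2 * (ehSq s (U τ - U t) + ehSq s (U t)) := ehSq_add_le s _ _
    _ ≤ 2 * (1 + M) := by rw [← hM]; gcongr
    _ = ((2 * (1 + M) : NNReal) : ENNReal) := by push_cast; rfl

lemma MemL2H.l2Sq_ne_top (hU : MemL2H s T U) : l2Sq s T U ≠ ⊤ := by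
  have hfinite := hU.2.2
  rw [hasFiniteIntegral_iff_ofReal (ae_of_all _ fun t => hSq_nonneg s (U t))] at hfinite
  rw [l2Sq, setLIntegral_congr_fun measurableSet_Ioc fun t ht => (hU.1 t ht).2.ehSq_eq]
  exact hfinite.ne

lemma l2Sq_const_sub_ne_top {c : Coef} (hc : ehSq s c ≠ ⊤) (hU : l2Sq s T U ≠ ⊤) :
    l2Sq s T (fun t => c - U t) ≠ ⊤ := by
  refine ne_top_of_le_ne_top ?_ (lintegral_mono fun t => ehSq_sub_le s c (U t))
  rw [lintegral_const_mul' _ _ ENNReal.ofNat_ne_top, lintegral_add_left measurable_const,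
    setLIntegral_const]
  exact ENNReal.mul_ne_top ENNReal.ofNat_ne_top
    (ENNReal.add_ne_top.2 ⟨ENNReal.mul_ne_top hc (by simp), hU⟩)

end Trajectories

lemma of_forall_step {P : ℝ → Prop} {x₀ δ b : ℝ} (hδ : 0 < δ) (hb : x₀ ≤ b) (h0 : P x₀)
    (hstep : ∀ x y, x₀ ≤ x → x < y → y ≤ x + δ → y ≤ b → P x → P y) : P b := by
  have hmin (n : ℕ) : P (min (x₀ + n * δ) b) := by
    induction n with
    | zero => simpa [hb] using h0
    | succ n ih =>
      have hle : x₀ + n * δ ≤ x₀ + (n + 1 : ℕ) * δ := by push_cast; linarith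
      rcases (min_le_min_right b hle).eq_or_lt with heq | hlt
      · rwa [← heq]
      · refine hstep _ _ (le_min (by linarith [mul_nonneg n.cast_nonneg hδ.le]) hb) hlt ?_
          (min_le_right _ _) ih
        rw [← min_add_add_right]
        exact min_le_min (by push_cast; linarith) (by linarith)
  obtain ⟨n, hn⟩ := exists_nat_ge ((b - x₀) / δ)
  rw [div_le_iff₀ hδ] at hn
  simpa [min_eq_right (show b ≤ x₀ + n * δ by linarith)] using hmin n

section NavierStokesRegularity

variable {ν T b : ℝ} {f θ : Coef} {u : ℝ → Coef}

lemma IsNSSol.finH_one (hu : IsNSSol ν f T θ u) (hθ : FinH 1 θ) {t : ℝ} (ht : t ∈ Icc 0 T) :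
    FinH 1 (u t) := by
  rcases ht.1.eq_or_lt with rfl | hpos
  · rwa [hu.init]
  · exact (hu.memL2H2.1 t ⟨hpos, ht.2⟩).2.mono one_le_two

lemma IsNSSol.isHeatSol (hu : IsNSSol ν f T θ u) (hθ : FinH 1 θ) :
    IsHeatSol ν 0 T u (fun t => f - Bc (u t) (u t)) := by
  refine ⟨hu.contH1.continuousOn_coord fun t ht => hu.finH_one hθ ht, fun k t ht => ?_⟩
  refine (hu.deriv k t ht).congr_deriv ?_
  rw [add_zero, Complex.real_smul, Pi.sub_apply]
  ring

/-- The quadratic term gains because `‖u‖_{β+1/2}` interpolates between `‖u‖_β`, bounded in time,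
and `‖u‖_{β+1}`, square integrable in time. -/
lemma exists_l2Sq_Bc_self_le {β γ : ℝ} (hβ : 1 ≤ β) (hβγ : β < γ) (hγ : γ ≤ β + 1 / 2)
    {M : NNReal} (hM : ∀ t ∈ Icc 0 T, ehSq β (u t) ≤ M) :
    ∃ C : NNReal, l2Sq (γ - 1) T (fun t => Bc (u t) (u t)) ≤ C * l2Sq (β + 1) T u := by
  obtain ⟨K, hK⟩ := exists_ehSq_Bc_le (r := γ) (s := γ) (by linarith)
    (abs_of_nonneg (by linarith)).le
  refine ⟨K * M, l2Sq_le_mul ENNReal.coe_ne_top fun t ht => ?_⟩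
  calc ehSq (γ - 1) (Bc (u t) (u t))
      ≤ K * (ehSq γ (u t) * ehSq γ (u t)) := (hK (u t) (u t)).1
    _ ≤ K * ehSq ((β + (β + 1)) / 2) (u t) ^ 2 := by
        rw [← sq]
        gcongr
        exact ehSq_mono (by linarith) (u t)
    _ ≤ K * (M * ehSq (β + 1) (u t)) := by
        gcongr
        refine (ehSq_interpolation β (β + 1) (u t)).trans ?_
        gcongr
        exact hM t (Ioc_subset_Icc_self ht)
    _ = (K * M : NNReal) * ehSq (β + 1) (u t) := by
        push_cast
        ring

theorem IsNSSol.exists_ehSq_le (hu : IsNSSol ν f T θ u) (hν : 0 < ν) (hT : 0 ≤ T) (hb : 1 ≤ b)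
    (hθ : FinH b θ) (hf : FinH (b - 1) f) :
    ∃ M : NNReal, ∀ t ∈ Icc 0 T, ehSq b (u t) ≤ M := by
  have hθ1 : FinH 1 θ := hθ.mono hb
  have hheat := hu.isHeatSol hθ1
  refine (of_forall_step one_half_pos hb (P := fun β =>
    (∃ M : NNReal, ∀ t ∈ Icc 0 T, ehSq β (u t) ≤ M) ∧ l2Sq (β + 1) T u ≠ ⊤) ⟨?_, ?_⟩ ?_).1
  · exact hu.contH1.exists_ehSq_le fun t ht => hu.finH_one hθ1 ht
  · rw [one_add_one_eq_two]
    exact hu.memL2H2.l2Sq_ne_top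
  rintro β γ hβ hβγ hγ hγb ⟨⟨M, hM⟩, hL2⟩
  obtain ⟨C, hC⟩ := exists_l2Sq_Bc_self_le hβ hβγ hγ hM
  have hforcing : l2Sq (γ - 1) T (fun t => f - Bc (u t) (u t)) ≠ ⊤ :=
    l2Sq_const_sub_ne_top (finH_iff_ehSq_ne_top.1 (hf.mono (by linarith)))
      (ne_top_of_le_ne_top (by finiteness) hC)
  have hinit : ehSq γ (u 0) ≠ ⊤ := by
    rw [hu.init]
    exact finH_iff_ehSq_ne_top.1 (hθ.mono hγb)
  have hν' : (ENNReal.ofReal ν)⁻¹ ≠ ⊤ := by simpa using hν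
  obtain ⟨M', hM'⟩ : ∃ M' : NNReal, (M' : ENNReal) = ehSq γ (u 0) + (ENNReal.ofReal ν)⁻¹
      * l2Sq (γ - 1) T (fun t => f - Bc (u t) (u t)) := ⟨_, ENNReal.coe_toNNReal (by finiteness)⟩
  exact ⟨⟨M', fun t ht => (hheat.ehSq_le hν γ ht).trans_eq hM'.symm⟩,
    hheat.l2Sq_succ_ne_top hν hT hinit hforcing⟩

end NavierStokesRegularity

section LinearizedEquation

/-- The right-hand side `−B[u,U] − B[U,u]` of the Navier–Stokes equations linearized along `u`, seen
as the forcing of a heat equation. -/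
def linForcing (u U : ℝ → Coef) (t : ℝ) : Coef := -Bc (u t) (U t) - Bc (U t) (u t)

variable {ν T r s : ℝ} {ξ : Coef} {u U : ℝ → Coef} {M : NNReal}

lemma exists_ehSq_linForcing_le (hr : 1 < r) (hs : |s| ≤ r)
    (hM : ∀ t ∈ Icc 0 T, ehSq r (u t) ≤ M) :
    ∃ Q : NNReal, ∀ U : ℝ → Coef, ∀ t ∈ Ioc 0 T,
      ehSq (s - 1) (linForcing u U t) ≤ Q * ehSq s (U t) := by
  obtain ⟨K, hK⟩ := exists_ehSq_Bc_le hr hs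
  refine ⟨4 * K * M, fun U t ht => ?_⟩
  have hMt := hM t (Ioc_subset_Icc_self ht)
  calc ehSq (s - 1) (linForcing u U t)
      ≤ 2 * (ehSq (s - 1) (Bc (u t) (U t)) + ehSq (s - 1) (Bc (U t) (u t))) := by
        rw [← ehSq_neg (s - 1) (Bc (u t) (U t))]
        exact ehSq_sub_le _ _ _
    _ ≤ 2 * (K * (M * ehSq s (U t)) + K * (M * ehSq s (U t))) := by
        gcongr
        · exact (hK _ _).1.trans (by gcongr)
        · exact (hK _ _).2.trans (by gcongr)
    _ = (4 * K * M : NNReal) * ehSq s (U t) := by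
        push_cast
        ring

lemma IsLinSol.isHeatSol (hU : IsLinSol ν u T ξ U) (hξ : FinH 0 ξ) (hcont : ContH 0 T U)
    (hL2 : MemL2H 1 T U) : IsHeatSol ν 0 T U (linForcing u U) := by
  have hfin (t : ℝ) (ht : t ∈ Icc 0 T) : FinH 0 (U t) := by
    rcases ht.1.eq_or_lt with rfl | hpos
    · rwa [hU.init]
    · exact (hL2.1 t ⟨hpos, ht.2⟩).2.mono zero_le_one
  refine ⟨hcont.continuousOn_coord hfin, fun k t ht => (hU.deriv k t ht).congr_deriv ?_⟩
  rw [add_zero, Complex.real_smul, linForcing, Pi.sub_apply, Pi.neg_apply, Pi.zero_apply]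
  ring

lemma IsHeatSol.l2Sq_ne_top_of_linForcing (hU : IsHeatSol ν 0 T U (linForcing u U)) (hν : 0 < ν)
    (hT : 0 ≤ T) (hr : 1 < r) (hM : ∀ t ∈ Icc 0 T, ehSq r (u t) ≤ M) (h0 : ehSq r (U 0) ≠ ⊤)
    (hL2 : l2Sq 1 T U ≠ ⊤) : l2Sq r T U ≠ ⊤ := by
  refine of_forall_step (P := fun β => l2Sq β T U ≠ ⊤) one_pos hr.le hL2
    fun β γ hβ _ hγβ hγr hβL2 => ?_
  obtain ⟨Q, hQ⟩ := exists_ehSq_linForcing_le (s := γ - 1) hr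
    (abs_le.2 ⟨by linarith, by linarith⟩) hM
  have hforcing : l2Sq (γ - 1 - 1) T (linForcing u U) ≠ ⊤ :=
    ne_top_of_le_ne_top (ENNReal.mul_ne_top ENNReal.coe_ne_top
      (ne_top_of_le_ne_top hβL2 (l2Sq_mono (by linarith))))
      (l2Sq_le_mul ENNReal.coe_ne_top (hQ U))
  rw [← sub_add_cancel γ 1]
  exact hU.l2Sq_succ_ne_top hν hT
    (ne_top_of_le_ne_top h0 (ehSq_mono (by linarith) _)) hforcing

lemma exists_l2Sq_succ_le_of_linForcing (hν : 0 < ν) (hT : 0 ≤ T) (hr : 1 < r) (hs : |s| ≤ r)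
    (hM : ∀ t ∈ Icc 0 T, ehSq r (u t) ≤ M) :
    ∃ C : NNReal, ∀ U, IsHeatSol ν 0 T U (linForcing u U) → l2Sq r T U ≠ ⊤ →
      l2Sq (s + 1) T U ≤ C * ehSq s (U 0) := by
  obtain ⟨Q, hQ⟩ := exists_ehSq_linForcing_le hr hs hM
  have hν' : (ENNReal.ofReal ν)⁻¹ ≠ ⊤ := by simpa using hν
  obtain ⟨C, hC⟩ : ∃ C : NNReal,
      (C : ENNReal) = ENNReal.ofReal (Real.exp (Q / ν * T)) ^ 2 * (ENNReal.ofReal ν)⁻¹ :=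
    ⟨_, ENNReal.coe_toNNReal (by finiteness)⟩
  refine ⟨C, fun U hU hL2 => ?_⟩
  rw [hC]
  exact hU.l2Sq_succ_le_of_forcing_le hν hT (hQ U)
    (ne_top_of_le_ne_top hL2 (l2Sq_mono ((le_abs_self s).trans hs)))

/-- `U - S U(0)` solves a heat equation with zero initial value, so it inherits the regularity of
the forcing and gains one derivative over `U`. -/
lemma exists_l2Sq_sub_heatS_le_of_linForcing (hν : 0 < ν) (hT : 0 ≤ T) (hr : 1 < r)
    (hs : |s| ≤ r) (hs' : |s + 1| ≤ r) (hM : ∀ t ∈ Icc 0 T, ehSq r (u t) ≤ M) :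
    ∃ C : NNReal, ∀ U, IsHeatSol ν 0 T U (linForcing u U) → l2Sq r T U ≠ ⊤ →
      l2Sq (s + 2) T (fun t => U t - heatS ν t (U 0)) ≤ C * ehSq s (U 0) := by
  obtain ⟨C₁, hC₁⟩ := exists_l2Sq_succ_le_of_linForcing hν hT hr hs hM
  obtain ⟨Q, hQ⟩ := exists_ehSq_linForcing_le hr hs' hM
  obtain ⟨N, hN⟩ : ∃ N : NNReal, (N : ENNReal) = (ENNReal.ofReal ν)⁻¹ :=
    ⟨_, ENNReal.coe_toNNReal (by simpa using hν)⟩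
  refine ⟨N * (N * (Q * C₁)), fun U hU hL2 => ?_⟩
  have hdiff : IsHeatSol ν 0 T (fun t => U t - heatS ν t (U 0)) (linForcing u U - 0) :=
    hU.sub (isHeatSol_heatS ν T (U 0))
  have hforcing : l2Sq (s + 1 - 1) T (linForcing u U) ≤ Q * (C₁ * ehSq s (U 0)) := by
    refine (l2Sq_le_mul ENNReal.coe_ne_top (hQ U)).trans ?_
    gcongr
    exact hC₁ U hU hL2
  calc l2Sq (s + 2) T (fun t => U t - heatS ν t (U 0))
      = l2Sq (s + 1 + 1) T (fun t => U t - heatS ν t (U 0)) := by ring_nf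
    _ ≤ N * (ehSq (s + 1) (U 0 - heatS ν 0 (U 0)) + N * l2Sq (s + 1 - 1) T (linForcing u U - 0)) :=
        hN ▸ hdiff.l2Sq_succ_le hν hT (s + 1)
    _ ≤ N * (N * (Q * (C₁ * ehSq s (U 0)))) := by
        rw [heatS_zero, sub_self, ehSq_zero, zero_add, sub_zero]
        gcongr
    _ = (N * (N * (Q * C₁)) : NNReal) * ehSq s (U 0) := by
        push_cast
        ring

end LinearizedEquation

section Pairing

/-- The pairing `∑ |c_k| |d_k|`, an upper bound for the `L²` inner product which is defined and
measurable without any summability condition. -/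
def absInner (c d : Coef) : ENNReal := ∑' k, ‖c k‖ₑ * ‖d k‖ₑ

lemma enorm_innerC_le (c d : Coef) : ‖innerC c d‖ₑ ≤ absInner c d := by
  refine enorm_tsum_le_tsum_enorm.trans_eq (tsum_congr fun k => ?_)
  rw [enorm_mul, ← ofReal_norm ((starRingEnd ℂ) (d k)), RCLike.norm_conj, ofReal_norm]

lemma absInner_sq_le (s : ℝ) (c d : Coef) : absInner c d ^ 2 ≤ ehSq s c * ehSq (-s) d := by
  have hweight (k : Freq) : elam k ^ (s / 2) * elam k ^ (-s / 2) = 1 := by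
    rw [← elam_rpow_add, show s / 2 + -s / 2 = 0 by ring, ENNReal.rpow_zero]
  have hsq (s : ℝ) (k : Freq) : (elam k ^ (s / 2)) ^ 2 = elam k ^ s := by
    rw [sq, ← elam_rpow_add, add_halves]
  have hcs := tsum_mul_sq_le (fun k => elam k ^ (s / 2) * ‖c k‖ₑ)
    (fun k => elam k ^ (-s / 2) * ‖d k‖ₑ)
  have hterm (k : Freq) :
      elam k ^ (s / 2) * ‖c k‖ₑ * (elam k ^ (-s / 2) * ‖d k‖ₑ) = ‖c k‖ₑ * ‖d k‖ₑ := by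
    rw [mul_mul_mul_comm, hweight, one_mul]
  simp only [hterm, mul_pow, hsq] at hcs
  exact hcs

variable {s T : ℝ} {U V : ℝ → Coef}

lemma aemeasurable_ehSq (hU : ∀ k, AEMeasurable (fun t => U t k) (volume.restrict (Ioc 0 T)))
    (s : ℝ) : AEMeasurable (fun t => ehSq s (U t)) (volume.restrict (Ioc 0 T)) :=
  AEMeasurable.tsum fun k => ((hU k).enorm.pow_const 2).const_mul _

lemma aemeasurable_absInner
    (hU : ∀ k, AEMeasurable (fun t => U t k) (volume.restrict (Ioc 0 T)))
    (hV : ∀ k, AEMeasurable (fun t => V t k) (volume.restrict (Ioc 0 T))) :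
    AEMeasurable (fun t => absInner (U t) (V t)) (volume.restrict (Ioc 0 T)) :=
  AEMeasurable.tsum fun k => (hU k).enorm.mul (hV k).enorm

lemma lintegral_absInner_sq_le
    (hU : ∀ k, AEMeasurable (fun t => U t k) (volume.restrict (Ioc 0 T)))
    (hV : ∀ k, AEMeasurable (fun t => V t k) (volume.restrict (Ioc 0 T))) (s : ℝ) :
    (∫⁻ t in Ioc 0 T, absInner (U t) (V t)) ^ 2 ≤ l2Sq s T U * l2Sq (-s) T V := by
  have hsqrt_sq (x : ENNReal) : (x ^ (1 / 2 : ℝ)) ^ 2 = x := by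
    rw [← ENNReal.rpow_natCast, ← ENNReal.rpow_mul]
    norm_num
  have hpointwise (t : ℝ) : absInner (U t) (V t)
      ≤ ehSq s (U t) ^ (1 / 2 : ℝ) * ehSq (-s) (V t) ^ (1 / 2 : ℝ) := by
    rw [← ENNReal.pow_le_pow_left_iff two_ne_zero, mul_pow, hsqrt_sq, hsqrt_sq]
    exact absInner_sq_le s _ _
  have hcs := lintegral_mul_sq_le _ ((aemeasurable_ehSq hU s).pow_const (1 / 2 : ℝ))
    ((aemeasurable_ehSq hV (-s)).pow_const (1 / 2 : ℝ))
  simp only [hsqrt_sq] at hcs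
  exact (pow_le_pow_left' (lintegral_mono hpointwise) 2).trans hcs

end Pairing

section LowModes

lemma finite_setOf_lam_le (Λ : ℝ) : {k : Freq | lam k ≤ Λ}.Finite := by
  refine Set.Finite.of_finite_image (f := Subtype.val) ?_ Subtype.val_injective.injOn
  refine ((isCompact_closedBall (0 : ℤ × ℤ) √Λ).finite_of_discrete).subset ?_
  rintro _ ⟨k, hk, rfl⟩
  rw [mem_closedBall_zero_iff]
  exact Real.le_sqrt_of_sq_le ((norm_sq_le_lamZ k.1).trans hk)

/-- The finitely many frequencies with eigenvalue at most `Λ`. -/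
def lowModes (Λ : ℝ) : Finset Freq := (finite_setOf_lam_le Λ).toFinset

lemma mem_lowModes {Λ : ℝ} {k : Freq} : k ∈ lowModes Λ ↔ lam k ≤ Λ :=
  (finite_setOf_lam_le Λ).mem_toFinset

lemma ehSq_le_of_forall_sum_lowModes_le {s : ℝ} {c : Coef} {D : ENNReal}
    (h : ∀ Λ, ∑ k ∈ lowModes Λ, elam k ^ s * ‖c k‖ₑ ^ 2 ≤ D) : ehSq s c ≤ D := by
  rw [ehSq, ENNReal.tsum_eq_iSup_sum]
  refine iSup_le fun F => (Finset.sum_le_sum_of_subset fun k hk => ?_).trans (h (∑ k ∈ F, lam k))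
  exact mem_lowModes.2 (Finset.single_le_sum (fun k _ => (lam_pos k).le) hk)

end LowModes

section Duality

lemma fneg_fneg (k : Freq) : fneg (fneg k) = k := Subtype.ext (neg_neg k.1)

lemma fneg_ne (k : Freq) : fneg k ≠ k := fun h =>
  k.2 (self_eq_neg.1 (congrArg Subtype.val h).symm)

lemma lam_fneg (k : Freq) : lam (fneg k) = lam k := lamZ_neg k.1

lemma fneg_mem_lowModes {Λ : ℝ} {k : Freq} : fneg k ∈ lowModes Λ ↔ k ∈ lowModes Λ := by
  rw [mem_lowModes, mem_lowModes, lam_fneg]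

lemma IsReal.sub {c d : Coef} (hc : IsReal c) (hd : IsReal d) : IsReal (c - d) := fun k => by
  simp only [Pi.sub_apply, hc k, hd k, map_sub]
  ring

lemma IsReal.heatS {c : Coef} (hc : IsReal c) (ν t : ℝ) : IsReal (heatS ν t c) := fun k => by
  simp only [NS2D.heatS, lam_fneg, hc k, map_mul, Complex.conj_ofReal]
  ring

lemma IsReal.conj_innerC {c d : Coef} (hc : IsReal c) (hd : IsReal d) :
    (starRingEnd ℂ) (innerC c d) = innerC c d := by
  rw [innerC, Complex.conj_tsum, ← (Function.Involutive.toPerm fneg fneg_fneg).tsum_eq]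
  refine tsum_congr fun k => ?_
  change (starRingEnd ℂ) (c (fneg k) * (starRingEnd ℂ) (d (fneg k))) = _
  rw [hc k, hd k, map_neg, neg_mul_neg, map_mul, Complex.conj_conj, Complex.conj_conj]

lemma IsReal.memHinf_of_finite_support {g : Coef} (hg : IsReal g) (h : g.support.Finite) :
    MemHinf g := by
  refine fun s => ⟨hg, summable_of_hasFiniteSupport (h.subset fun k hk hk0 => hk ?_)⟩
  simp [hk0]

open Classical in
/-- The real field with coefficient `z` at `k`, and hence `−z̄` at `−k`. -/
def realMode (k : Freq) (z : ℂ) : Coef :=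
  Pi.single k z - Pi.single (fneg k) ((starRingEnd ℂ) z)

lemma isReal_realMode (k : Freq) (z : ℂ) : IsReal (realMode k z) := by
  intro j
  by_cases hjk : j = k
  · simp [realMode, hjk, fneg_ne, (fneg_ne k).symm]
  by_cases hjk' : j = fneg k
  · simp [realMode, hjk', fneg_fneg, fneg_ne, (fneg_ne k).symm]
  have hneg_ne : fneg j ≠ fneg k := fun h => hjk (Function.Involutive.injective fneg_fneg h)
  have hneg_ne' : fneg j ≠ k := fun h => hjk' (by rw [← h, fneg_fneg])
  simp [realMode, hjk, hjk', hneg_ne, hneg_ne']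

lemma memHinf_realMode (k : Freq) (z : ℂ) : MemHinf (realMode k z) := by
  classical
  refine (isReal_realMode k z).memHinf_of_finite_support
    ((Set.toFinite {k, fneg k}).subset fun j hj => ?_)
  contrapose! hj
  simp only [mem_insert_iff, mem_singleton_iff, not_or] at hj
  simp [realMode, hj]

lemma innerC_realMode (c : Coef) (k : Freq) (z : ℂ) :
    innerC c (realMode k z) = c k * (starRingEnd ℂ) z - c (fneg k) * z := by
  classical
  rw [innerC, tsum_eq_sum (s := {k, fneg k}), Finset.sum_pair (fneg_ne k).symm]
  · simp [realMode, fneg_ne, (fneg_ne k).symm, sub_eq_add_neg]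
  · intro j hj
    simp only [Finset.mem_insert, Finset.mem_singleton, not_or] at hj
    simp [realMode, hj]

lemma isReal_of_conj_innerC {c : Coef}
    (h : ∀ g, MemHinf g → (starRingEnd ℂ) (innerC c g) = innerC c g) : IsReal c := by
  intro k
  have him (z : ℂ) : (c k * (starRingEnd ℂ) z - c (fneg k) * z).im = 0 := by
    rw [← innerC_realMode]
    exact Complex.conj_eq_iff_im.1 (h _ (memHinf_realMode k z))
  have him_one := him 1
  have him_I := him Complex.I
  simp only [map_one, mul_one, Complex.sub_im] at him_one
  simp only [Complex.conj_I, mul_neg, Complex.sub_im, Complex.neg_im, Complex.mul_im,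
    Complex.I_im, mul_one, Complex.I_re, mul_zero, add_zero] at him_I
  exact Complex.ext (by simp; linarith) (by simp; linarith)

/-- The Galerkin truncation of `(−Δ)^s c` to the frequencies with eigenvalue at most `Λ`. It is the
field against which testing `c` yields the truncated `Ḣ^s`-norm of `c`. -/
def dualTest (s Λ : ℝ) (c : Coef) : Coef :=
  (lowModes Λ : Set Freq).indicator fun k => (lam k ^ s) • c k

lemma IsReal.memHinf_dualTest {c : Coef} (hc : IsReal c) (s Λ : ℝ) : MemHinf (dualTest s Λ c) := by
  refine IsReal.memHinf_of_finite_support (fun k => ?_)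
    ((lowModes Λ).finite_toSet.subset Set.support_indicator_subset)
  by_cases hk : k ∈ lowModes Λ
  · simp [dualTest, hk, fneg_mem_lowModes, lam_fneg, hc k]
  · simp [dualTest, hk, fneg_mem_lowModes]

lemma enorm_innerC_dualTest (s Λ : ℝ) (c : Coef) :
    ‖innerC c (dualTest s Λ c)‖ₑ = ∑ k ∈ lowModes Λ, elam k ^ s * ‖c k‖ₑ ^ 2 := by
  have hinner : innerC c (dualTest s Λ c)
      = ((∑ k ∈ lowModes Λ, lam k ^ s * ‖c k‖ ^ 2 : ℝ) : ℂ) := by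
    rw [innerC, tsum_eq_sum (s := lowModes Λ) fun k hk => by simp [dualTest, hk]]
    push_cast
    refine Finset.sum_congr rfl fun k hk => ?_
    rw [dualTest, Set.indicator_of_mem (Finset.mem_coe.2 hk), ← Complex.mul_conj',
      Complex.real_smul, map_mul, Complex.conj_ofReal]
    ring
  rw [hinner, ← ofReal_norm, Complex.norm_of_nonneg
    (Finset.sum_nonneg fun k _ => lam_rpow_mul_norm_sq_nonneg s c k),
    ENNReal.ofReal_sum_of_nonneg fun k _ => lam_rpow_mul_norm_sq_nonneg s c k]
  exact Finset.sum_congr rfl fun k _ => ofReal_lam_rpow_mul_norm_sq s c k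

lemma ehSq_neg_dualTest (s Λ : ℝ) (c : Coef) :
    ehSq (-s) (dualTest s Λ c) = ∑ k ∈ lowModes Λ, elam k ^ s * ‖c k‖ₑ ^ 2 := by
  rw [ehSq, tsum_eq_sum (s := lowModes Λ) fun k hk => by simp [dualTest, hk]]
  refine Finset.sum_congr rfl fun k hk => ?_
  have hlam : ‖lam k ^ s‖ₑ = elam k ^ s := by
    rw [elam_rpow, Real.enorm_of_nonneg (Real.rpow_nonneg (lam_pos k).le s)]
  have hcancel : elam k ^ (-s) * (elam k ^ s * elam k ^ s) = elam k ^ s := by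
    rw [← elam_rpow_add, ← elam_rpow_add, neg_add_cancel_left]
  rw [dualTest, Set.indicator_of_mem (by simpa using hk), enorm_smul, hlam, mul_pow, ← mul_assoc,
    sq (elam k ^ s), hcancel]

lemma ehSq_le_of_forall_enorm_innerC_sq_le {s : ℝ} {c : Coef} (hc : IsReal c) {D : ENNReal}
    (h : ∀ g, MemHinf g → ‖innerC c g‖ₑ ^ 2 ≤ D * ehSq (-s) g) : ehSq s c ≤ D := by
  refine ehSq_le_of_forall_sum_lowModes_le fun Λ => ?_
  have htest := h _ (hc.memHinf_dualTest s Λ)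
  have hfin : ∑ k ∈ lowModes Λ, elam k ^ s * ‖c k‖ₑ ^ 2 ≠ ⊤ := by
    rw [← enorm_innerC_dualTest]
    exact enorm_ne_top
  rw [enorm_innerC_dualTest, ehSq_neg_dualTest, sq] at htest
  rcases eq_or_ne (∑ k ∈ lowModes Λ, elam k ^ s * ‖c k‖ₑ ^ 2) 0 with hzero | hzero
  · rw [hzero]
    exact zero_le
  · exact (ENNReal.mul_le_mul_iff_left hzero hfin).1 htest

end Duality

section PerturbationForm

/-- The bilinear form `∫₀ᵀ ⟨(𝕀−ℒ)ξ, 𝕀g⟩ + ⟨ℒξ, (𝕀−ℒ)g⟩` of the operator `𝒦`, as a function of the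
trajectories `U = 𝕀ξ` and `V = 𝕀g`. -/
def kForm (ν T : ℝ) (U V : ℝ → Coef) : ℂ :=
  ∫ t in (0 : ℝ)..T, (innerC (U t - heatS ν t (U 0)) (V t)
    + innerC (heatS ν t (U 0)) (V t - heatS ν t (V 0)))

variable {ν T r s : ℝ} {u U V : ℝ → Coef} {M : NNReal}

lemma conj_kForm (hT : 0 ≤ T) (hU : ∀ t ∈ Icc 0 T, IsReal (U t))
    (hV : ∀ t ∈ Icc 0 T, IsReal (V t)) : (starRingEnd ℂ) (kForm ν T U V) = kForm ν T U V := by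
  rw [kForm, intervalIntegral.integral_of_le hT, ← integral_conj]
  refine setIntegral_congr_fun measurableSet_Ioc fun t ht => ?_
  have hSU := (hU 0 (left_mem_Icc.2 hT)).heatS ν t
  have hSV := (hV 0 (left_mem_Icc.2 hT)).heatS ν t
  have hUt := hU t (Ioc_subset_Icc_self ht)
  have hVt := hV t (Ioc_subset_Icc_self ht)
  simp only [map_add, (hUt.sub hSU).conj_innerC hVt, hSU.conj_innerC (hVt.sub hSV)]

lemma enorm_kForm_sq_le (hT : 0 ≤ T) {G H : ℝ → Coef} (hU : IsHeatSol ν 0 T U G)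
    (hV : IsHeatSol ν 0 T V H) (s s' : ℝ) :
    ‖kForm ν T U V‖ₑ ^ 2
      ≤ 2 * (l2Sq s T (fun t => U t - heatS ν t (U 0)) * l2Sq (-s) T V
        + l2Sq s' T (fun t => heatS ν t (U 0))
          * l2Sq (-s') T (fun t => V t - heatS ν t (V 0))) := by
  have hSU := isHeatSol_heatS ν T (U 0)
  have hUdiff : IsHeatSol ν 0 T (fun t => U t - heatS ν t (U 0)) (G - 0) := hU.sub hSU
  have hVdiff : IsHeatSol ν 0 T (fun t => V t - heatS ν t (V 0)) (H - 0) :=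
    hV.sub (isHeatSol_heatS ν T (V 0))
  calc ‖kForm ν T U V‖ₑ ^ 2
      ≤ ((∫⁻ t in Ioc 0 T, absInner (U t - heatS ν t (U 0)) (V t))
        + ∫⁻ t in Ioc 0 T, absInner (heatS ν t (U 0)) (V t - heatS ν t (V 0))) ^ 2 := by
        rw [kForm, intervalIntegral.integral_of_le hT,
          ← lintegral_add_left' (aemeasurable_absInner hUdiff.aemeasurable hV.aemeasurable)]
        gcongr
        refine (enorm_integral_le_lintegral_enorm _).trans (lintegral_mono fun t => ?_)
        exact (enorm_add_le _ _).trans (add_le_add (enorm_innerC_le _ _) (enorm_innerC_le _ _))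
    _ ≤ _ := by
        refine (ennreal_add_sq_le _ _).trans ?_
        gcongr
        · exact lintegral_absInner_sq_le hUdiff.aemeasurable hV.aemeasurable s
        · exact lintegral_absInner_sq_le hSU.aemeasurable hVdiff.aemeasurable s'

lemma exists_enorm_kForm_sq_le (hν : 0 < ν) (hT : 0 ≤ T) (hs : |s| ≤ r) (hs' : |s + 3| ≤ r)
    (hM : ∀ t ∈ Icc 0 T, ehSq r (u t) ≤ M) :
    ∃ C : NNReal, ∀ U V, IsHeatSol ν 0 T U (linForcing u U) → IsHeatSol ν 0 T V (linForcing u V) →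
      l2Sq r T U ≠ ⊤ → l2Sq r T V ≠ ⊤ →
        ‖kForm ν T U V‖ₑ ^ 2 ≤ C * ehSq s (U 0) * ehSq (-(s + 3)) (V 0) := by
  rw [abs_le] at hs hs'
  have hr : 1 < r := by linarith
  obtain ⟨A, hA⟩ := exists_l2Sq_sub_heatS_le_of_linForcing (s := s) hν hT hr
    (abs_le.2 ⟨hs.1, hs.2⟩) (abs_le.2 ⟨by linarith, by linarith⟩) hM
  obtain ⟨B, hB⟩ := exists_l2Sq_succ_le_of_linForcing (s := -(s + 3)) hν hT hr
    (abs_le.2 ⟨by linarith, by linarith⟩) hM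
  obtain ⟨B', hB'⟩ := exists_l2Sq_sub_heatS_le_of_linForcing (s := -(s + 3)) hν hT hr
    (abs_le.2 ⟨by linarith, by linarith⟩) (abs_le.2 ⟨by linarith, by linarith⟩) hM
  obtain ⟨N, hN⟩ : ∃ N : NNReal, (N : ENNReal) = (ENNReal.ofReal ν)⁻¹ :=
    ⟨_, ENNReal.coe_toNNReal (by simpa using hν)⟩
  refine ⟨2 * (A * B + N * B'), fun U V hU hV hUL2 hVL2 => ?_⟩
  refine (enorm_kForm_sq_le hT hU hV (s + 2) (s + 1)).trans ?_
  rw [show -(s + 2) = -(s + 3) + 1 by ring, show -(s + 1) = -(s + 3) + 2 by ring]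
  calc _ ≤ 2 * ((A * ehSq s (U 0)) * (B * ehSq (-(s + 3)) (V 0))
        + (N * ehSq s (U 0)) * (B' * ehSq (-(s + 3)) (V 0))) := by
        gcongr
        · exact hA U hU hUL2
        · exact hB V hV hVL2
        · exact hN ▸ l2Sq_heatS_le hν hT s (U 0)
        · exact hB' V hV hVL2
    _ = _ := by
        push_cast
        ring

end PerturbationForm

section Rellich

lemma exists_finset_subset_forall_norm_sub_lt {ι : Type*} (F : Finset ι) {B : Set (ι → ℂ)}
    {R : ι → ℝ} (hB : ∀ x ∈ B, ∀ k, ‖x k‖ ≤ R k) {η : ℝ} (hη : 0 < η) :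
    ∃ S : Finset (ι → ℂ), ↑S ⊆ B ∧ ∀ x ∈ B, ∃ y ∈ S, ∀ k ∈ F, ‖x k - y k‖ < η := by
  have hball : B ⊆ univ.pi fun k => Metric.closedBall 0 (R k) := fun x hx k _ =>
    mem_closedBall_zero_iff.2 (hB x hx k)
  have hbounded : TotallyBounded B :=
    (isCompact_univ_pi fun k => isCompact_closedBall 0 (R k)).totallyBounded.subset hball
  have hentourage : {p : (ι → ℂ) × (ι → ℂ) | ∀ k ∈ F, dist (p.1 k) (p.2 k) < η}
      ∈ uniformity (ι → ℂ) := by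
    have hcoord : (⋂ k ∈ F, {p : (ι → ℂ) × (ι → ℂ) | dist (p.1 k) (p.2 k) < η})
        ∈ uniformity (ι → ℂ) := (Filter.biInter_finset_mem F).2 fun k _ =>
      Pi.uniformContinuous_proj (fun _ => ℂ) k (Metric.dist_mem_uniformity hη)
    exact Filter.mem_of_superset hcoord fun p hp k hk => mem_iInter₂.1 hp k hk
  obtain ⟨S, hSB, hSfin, hcover⟩ := hbounded.exists_subset hentourage
  refine ⟨hSfin.toFinset, by simpa using hSB, fun x hx => ?_⟩
  obtain ⟨y, hy, hxy⟩ := mem_iUnion₂.1 (hcover hx)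
  exact ⟨y, hSfin.mem_toFinset.2 hy, fun k hk => (dist_eq_norm (x k) (y k)) ▸ hxy k hk⟩

variable {β γ : ℝ}

lemma ehSq_le_of_forall_enorm_le (hβγ : β ≤ γ) {Λ : ℝ} (hΛ : 0 < Λ) {η : ENNReal} {c : Coef}
    (hc : ∀ k ∈ lowModes Λ, ‖c k‖ₑ ≤ η) :
    ehSq β c ≤ (∑ k ∈ lowModes Λ, elam k ^ β) * η ^ 2
      + ENNReal.ofReal (Λ ^ (β - γ)) * ehSq γ c := by
  classical
  have hterm (k : Freq) : elam k ^ β * ‖c k‖ₑ ^ 2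
      ≤ (if k ∈ lowModes Λ then elam k ^ β * η ^ 2 else 0)
        + ENNReal.ofReal (Λ ^ (β - γ)) * (elam k ^ γ * ‖c k‖ₑ ^ 2) := by
    split_ifs with hk
    · exact le_add_right (by gcongr; exact hc k hk)
    · have hlam : Λ ≤ lam k := (not_le.1 (mt mem_lowModes.2 hk)).le
      have hdecay : elam k ^ (β - γ) ≤ ENNReal.ofReal (Λ ^ (β - γ)) := by
        rw [elam_rpow]
        exact ENNReal.ofReal_le_ofReal
          (Real.rpow_le_rpow_of_nonpos hΛ hlam (sub_nonpos.2 hβγ))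
      rw [zero_add, ← mul_assoc, ← sub_add_cancel β γ, elam_rpow_add, add_sub_cancel_right]
      gcongr
  calc ehSq β c ≤ ∑' k, ((if k ∈ lowModes Λ then elam k ^ β * η ^ 2 else 0)
        + ENNReal.ofReal (Λ ^ (β - γ)) * (elam k ^ γ * ‖c k‖ₑ ^ 2)) :=
        ENNReal.tsum_le_tsum hterm
    _ = _ := by
        rw [ENNReal.tsum_add, ENNReal.tsum_mul_left, Finset.sum_mul,
          tsum_eq_sum (s := lowModes Λ) fun k hk => if_neg hk]
        congr 1
        exact Finset.sum_congr rfl fun k hk => if_pos hk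

lemma hN_lt_of_ehSq_lt {c : Coef} {ε : ℝ} (hε : 0 < ε) (h : ehSq β c < ENNReal.ofReal (ε ^ 2)) :
    hN β c < ε := by
  have hc : FinH β c := finH_iff_ehSq_ne_top.2 (h.trans ENNReal.ofReal_lt_top).ne
  rw [hc.ehSq_eq, ENNReal.ofReal_lt_ofReal_iff (by positivity)] at h
  exact (Real.sqrt_lt' hε).2 h

lemma norm_le_of_ehSq_le {D : NNReal} {c : Coef} (hc : ehSq γ c ≤ D) (k : Freq) :
    ‖c k‖ ≤ √D / √(lam k ^ γ) := by
  have hfin : FinH γ c := finH_iff_ehSq_ne_top.2 (ne_top_of_le_ne_top ENNReal.coe_ne_top hc)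
  rw [hfin.ehSq_eq, ← ENNReal.ofReal_coe_nnreal, ENNReal.ofReal_le_ofReal_iff D.coe_nonneg] at hc
  rw [le_div_iff₀' (Real.sqrt_pos.2 (Real.rpow_pos_of_pos (lam_pos k) γ))]
  exact (hfin.sqrt_lam_rpow_mul_norm_le_hN k).trans (Real.sqrt_le_sqrt hc)

lemma exists_finset_hN_sub_lt (hβγ : β < γ) (D : NNReal) {ε : ℝ} (hε : 0 < ε) :
    ∃ S : Finset Coef, ∀ c, ehSq γ c ≤ D → ∃ d ∈ S, hN β (c - d) < ε := by
  have hhalf : ENNReal.ofReal (ε ^ 2) / 2 ≠ 0 := by simpa using hε.ne'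
  obtain ⟨n, hn, htail⟩ := ENNReal.exists_nnreal_pos_mul_lt
    (a := 2 * (D + D)) (by finiteness) hhalf
  set Λ : ℝ := (n : ℝ) ^ (β - γ)⁻¹
  have hΛ : Λ ^ (β - γ) = n := Real.rpow_inv_rpow n.coe_nonneg (sub_neg.2 hβγ).ne
  have hlow_ne_top : ∑ k ∈ lowModes Λ, elam k ^ β ≠ ⊤ := ENNReal.sum_ne_top.2 fun k _ => by
    rw [elam_rpow]
    exact ENNReal.ofReal_ne_top
  obtain ⟨m, hm, hlow⟩ := ENNReal.exists_nnreal_pos_mul_lt hlow_ne_top hhalf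
  obtain ⟨S, hS, hcover⟩ := exists_finset_subset_forall_norm_sub_lt (lowModes Λ)
    (B := {c | ehSq γ c ≤ D}) (fun c hc k => norm_le_of_ehSq_le hc k) (η := √m)
    (Real.sqrt_pos.2 hm)
  refine ⟨S, fun c hc => ?_⟩
  obtain ⟨d, hd, hcd⟩ := hcover c hc
  have hclose (k : Freq) (hk : k ∈ lowModes Λ) : ‖(c - d) k‖ₑ ≤ ENNReal.ofReal √m := by
    rw [← ofReal_norm]
    exact ENNReal.ofReal_le_ofReal (hcd k hk).le
  have hsqrt : ENNReal.ofReal √m ^ 2 = m := by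
    rw [← ENNReal.ofReal_pow (Real.sqrt_nonneg _), Real.sq_sqrt m.coe_nonneg,
      ENNReal.ofReal_coe_nnreal]
  refine ⟨d, hd, hN_lt_of_ehSq_lt hε ?_⟩
  calc ehSq β (c - d)
      ≤ (∑ k ∈ lowModes Λ, elam k ^ β) * ENNReal.ofReal √m ^ 2
        + ENNReal.ofReal (Λ ^ (β - γ)) * ehSq γ (c - d) :=
        ehSq_le_of_forall_enorm_le hβγ.le (Real.rpow_pos_of_pos hn _) hclose
    _ ≤ m * ∑ k ∈ lowModes Λ, elam k ^ β + n * (2 * (D + D)) := by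
        rw [hsqrt, mul_comm, hΛ, ENNReal.ofReal_coe_nnreal]
        gcongr
        exact (ehSq_sub_le γ c d).trans (by gcongr; exact hS hd)
    _ < ENNReal.ofReal (ε ^ 2) := by
        rw [← ENNReal.add_halves (ENNReal.ofReal (ε ^ 2))]
        exact ENNReal.add_lt_add hlow htail

end Rellich

section CompactPerturbation

lemma FinH.hN_le_of_ehSq_le {s t : ℝ} {c d : Coef} {C : NNReal} (hc : FinH s c) (hd : FinH t d)
    (h : ehSq t d ≤ C * ehSq s c) : hN t d ≤ √C * hN s c := by
  have hsqrt : (C : ENNReal) = ENNReal.ofReal √C ^ 2 := by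
    rw [← ENNReal.ofReal_pow (Real.sqrt_nonneg _), Real.sq_sqrt C.coe_nonneg,
      ENNReal.ofReal_coe_nnreal]
  rw [hc.ehSq_eq_hN, hd.ehSq_eq_hN, hsqrt, ← mul_pow,
    ← ENNReal.ofReal_mul (Real.sqrt_nonneg _), ENNReal.pow_le_pow_left_iff two_ne_zero] at h
  exact (ENNReal.ofReal_le_ofReal_iff
    (mul_nonneg (Real.sqrt_nonneg _) (Real.sqrt_nonneg _))).1 h

variable {a r T ν : ℝ} {θ f : Coef} {u : ℝ → Coef} {I : Coef → ℝ → Coef} {K : Coef → Coef}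

lemma isReal_of_innerC_eq_kForm (hT : 0 ≤ T)
    (hI : ∀ ξ, MemHinf ξ → ∀ t ∈ Icc 0 T, IsReal (I ξ t))
    (hK : ∀ ξ g, MemHinf ξ → MemHinf g → innerC (K ξ) g = kForm ν T (I ξ) (I g))
    {ξ : Coef} (hξ : MemHinf ξ) : IsReal (K ξ) :=
  isReal_of_conj_innerC fun g hg => by rw [hK ξ g hξ hg, conj_kForm hT (hI ξ hξ) (hI g hg)]

lemma exists_ehSq_add_three_le_of_innerC_eq_kForm (hν : 0 < ν) (hT : 0 ≤ T) (ha : |a| ≤ r)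
    (ha' : |a + 3| ≤ r) (hθ : FinH r θ) (hf : FinH (r - 1) f) (hu : IsNSSol ν f T θ u)
    (hI : ∀ ξ, MemHinf ξ → IsLinSol ν u T ξ (I ξ) ∧ ContH 0 T (I ξ) ∧ MemL2H 1 T (I ξ))
    (hK : ∀ ξ g, MemHinf ξ → MemHinf g → innerC (K ξ) g = kForm ν T (I ξ) (I g)) :
    ∃ C : NNReal, ∀ ξ, MemHinf ξ → ehSq (a + 3) (K ξ) ≤ C * ehSq a ξ := by
  have hr : 1 < r := by linarith [(abs_le.1 ha).1, (abs_le.1 ha').2]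
  obtain ⟨M, hM⟩ := hu.exists_ehSq_le hν hT hr.le hθ hf
  obtain ⟨C, hC⟩ := exists_enorm_kForm_sq_le hν hT ha ha' hM
  have hheat (ξ : Coef) (hξ : MemHinf ξ) : IsHeatSol ν 0 T (I ξ) (linForcing u (I ξ)) := by
    obtain ⟨hsol, hcont, hL2⟩ := hI ξ hξ
    exact hsol.isHeatSol (hξ 0).2 hcont hL2
  have hsmooth (ξ : Coef) (hξ : MemHinf ξ) : l2Sq r T (I ξ) ≠ ⊤ := by
    obtain ⟨hsol, -, hL2⟩ := hI ξ hξ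
    exact (hheat ξ hξ).l2Sq_ne_top_of_linForcing hν hT hr hM
      (hsol.init.symm ▸ hξ.ehSq_ne_top r) hL2.l2Sq_ne_top
  refine ⟨C, fun ξ hξ => ehSq_le_of_forall_enorm_innerC_sq_le
    (isReal_of_innerC_eq_kForm hT (fun ξ hξ => (hI ξ hξ).1.real) hK hξ) fun g hg => ?_⟩
  rw [hK ξ g hξ hg]
  simpa only [(hI ξ hξ).1.init, (hI g hg).1.init] using
    hC (I ξ) (I g) (hheat ξ hξ) (hheat g hg) (hsmooth ξ hξ) (hsmooth g hg)

end CompactPerturbation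

theorem statement17_general (a r T ν : ℝ) (hT : 0 ≤ T) (hν : 0 < ν) (ha : |a| ≤ r)
    (ha' : |a + 3| ≤ r) (θ f : Coef) (hθ : FinH r θ) (hf : FinH (r - 1) f)
    (u : ℝ → Coef) (hu : IsNSSol ν f T θ u) (I : Coef → ℝ → Coef)
    (hI : ∀ ξ, MemHinf ξ → IsLinSol ν u T ξ (I ξ) ∧ ContH 0 T (I ξ) ∧ MemL2H 1 T (I ξ))
    (K : Coef → Coef)
    (hK : ∀ ξ g, MemHinf ξ → MemHinf g →
      innerC (K ξ) g = ∫ t in (0 : ℝ)..T,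
        (innerC (I ξ t - heatS ν t ξ) (I g t) + innerC (heatS ν t ξ) (I g t - heatS ν t g))) :
    (∃ C : ℝ, 0 < C ∧ ∀ ξ, MemHinf ξ → MemH (a + 3) (K ξ) ∧ hN (a + 3) (K ξ) ≤ C * hN a ξ) ∧
    (∀ ε : ℝ, 0 < ε → ∃ S : Finset Coef, ∀ ξ, MemHinf ξ → hN a ξ ≤ 1 →
      ∃ s ∈ S, hN (a + 2) (K ξ - s) < ε) := by
  have hK' (ξ g : Coef) (hξ : MemHinf ξ) (hg : MemHinf g) :
      innerC (K ξ) g = kForm ν T (I ξ) (I g) := by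
    rw [hK ξ g hξ hg, kForm, (hI ξ hξ).1.init, (hI g hg).1.init]
  obtain ⟨C, hC⟩ := exists_ehSq_add_three_le_of_innerC_eq_kForm hν hT ha ha' hθ hf hu hI hK'
  have hmem (ξ : Coef) (hξ : MemHinf ξ) : MemH (a + 3) (K ξ) :=
    ⟨isReal_of_innerC_eq_kForm hT (fun ξ hξ => (hI ξ hξ).1.real) hK' hξ,
      finH_iff_ehSq_ne_top.2 (ne_top_of_le_ne_top
        (ENNReal.mul_ne_top ENNReal.coe_ne_top (hξ.ehSq_ne_top a)) (hC ξ hξ))⟩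
  refine ⟨⟨√C + 1, by positivity, fun ξ hξ => ⟨hmem ξ hξ, ?_⟩⟩, fun ε hε => ?_⟩
  · exact ((hξ a).2.hN_le_of_ehSq_le (hmem ξ hξ).2 (hC ξ hξ)).trans
      (mul_le_mul_of_nonneg_right (le_add_of_nonneg_right zero_le_one) (Real.sqrt_nonneg _))
  · obtain ⟨S, hS⟩ := exists_finset_hN_sub_lt (show a + 2 < a + 3 by linarith) C hε
    refine ⟨S, fun ξ hξ hξ_le => hS (K ξ) ((hC ξ hξ).trans (mul_le_of_le_one_right' ?_))⟩
    rw [(hξ a).2.ehSq_eq_hN]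
    exact pow_le_one' (ENNReal.ofReal_le_one.2 hξ_le) 2

/-- Lemma `PropCompactPerturbation`. For `a ∈ ℤ` and
`b = max{a+4, |a|+1}`, if `θ ∈ Ḣ^b_⋄` and `f ∈ Ḣ^{b−1}_⋄`, then the operator
`𝒦 = 𝕀_θ*(𝕀_θ − ℒ) + (𝕀_θ − ℒ)*ℒ` (so that `𝕀_θ*𝕀_θ = ℒ*ℒ + 𝒦`),
characterised on test fields by
`⟨𝒦ξ, g⟩_{L²} = ∫₀ᵀ [⟨(𝕀_θ−ℒ)ξ(t), 𝕀_θ g(t)⟩ + ⟨S_t ξ, (𝕀_θ−ℒ)g(t)⟩] dt`,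
maps `Ḣ^a_⋄` continuously into `Ḣ^{a+3}_⋄`, and defines a compact operator
from `Ḣ^a_⋄` to `Ḣ^{a+2}_⋄` (the image of the `Ḣ^a`-unit ball is totally
bounded in `Ḣ^{a+2}`). -/
theorem statement17 (a : ℤ) (T ν : ℝ) (hT : 0 < T) (hν : 0 < ν)
    (θ f : Coef)
    (hθ : MemH ((max (a + 4) (|a| + 1) : ℤ) : ℝ) θ)
    (hf : MemH (((max (a + 4) (|a| + 1) : ℤ) : ℝ) - 1) f)
    (uθ : ℝ → Coef) (huθ : IsNSSol ν f T θ uθ)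
    (I : Coef → ℝ → Coef)
    (hI : ∀ ξ, MemHinf ξ →
      IsLinSol ν uθ T ξ (I ξ) ∧ ContH 0 T (I ξ) ∧ MemL2H 1 T (I ξ))
    (K : Coef → Coef) (hKlin : IsLinMap K)
    (hK : ∀ ξ g, MemHinf ξ → MemHinf g →
      innerC (K ξ) g = ∫ t in (0:ℝ)..T,
        (innerC (I ξ t - heatS ν t ξ) (I g t) +
          innerC (heatS ν t ξ) (I g t - heatS ν t g))) :
    (∃ C : ℝ, 0 < C ∧ ∀ ξ, MemHinf ξ →
      MemH ((a : ℝ) + 3) (K ξ) ∧ hN ((a : ℝ) + 3) (K ξ) ≤ C * hN (a : ℝ) ξ) ∧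
    (∀ ε : ℝ, 0 < ε → ∃ S : Finset Coef, ∀ ξ, MemHinf ξ → hN (a : ℝ) ξ ≤ 1 →
      ∃ s ∈ S, hN ((a : ℝ) + 2) (K ξ - s) < ε) := by
  have ha : |a| ≤ max (a + 4) (|a| + 1) := by lia
  have ha' : |a + 3| ≤ max (a + 4) (|a| + 1) :=
    abs_le.2 ⟨by linarith [neg_abs_le a, le_max_right (a + 4) (|a| + 1)], by lia⟩
  exact statement17_general a _ T ν hT.le hν (by exact_mod_cast ha) (by exact_mod_cast ha') θ f
    hθ.2 hf.2 uθ huθ I hI K hK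

end NS2D
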